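/- For every ε ∈ (0, 0.25) there exist absolute constants C₁ and C₂ such that every finite simple graph G on n vertices with minimum degree δ ≥ 1 and without isolated edges satisfies s(G) ≤ (n/δ)·(1 + C₁/δ^ε) + C₂. -/

import Mathlib

noncomputable section

namespace FL

/-- The weighted degree of a vertex `v` under an edge weighting `f`. -/
def weightedDeg {V : Type*} [Fintype V] (G : SimpleGraph V) [DecidableRel G.Adj]
    (f : Sym2 V → ℕ) (v : V) : ℕ :=
  ∑ u ∈ G.neighborFinset v, f s(u, v)

/-- `f` is a `k`-irregular assignment for `G`: it takes values in `{1, …, k}` on the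
edges of `G` and the weighted degrees of the vertices are pairwise distinct. -/
def IsIrregularAssignment {V : Type*} [Fintype V] (G : SimpleGraph V) [DecidableRel G.Adj]
    (k : ℕ) (f : Sym2 V → ℕ) : Prop :=
  (∀ e ∈ G.edgeSet, f e ∈ Finset.Icc 1 k) ∧ Function.Injective (weightedDeg G f)

/-- The irregularity strength `s(G)`: the least positive integer `k` for which a
`k`-irregular assignment exists (`⊤ = ∞` if none exists). -/
def irregularityStrength {V : Type*} [Fintype V] (G : SimpleGraph V)
    [DecidableRel G.Adj] : ℕ∞ :=
  ⨅ (k : ℕ) (_ : 1 ≤ k) (_ : ∃ f : Sym2 V → ℕ, IsIrregularAssignment G k f), (k : ℕ∞)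

section helpers

open Finset

/-- Upper tail bound for independent `[0,1]`-valued variables on a finite product space. -/
lemma tail_bound {V Ω : Type*} [Fintype V] [DecidableEq V] [Fintype Ω] [Nonempty Ω]
    (s : Finset V) (ξ : V → Ω → ℝ) (h0 : ∀ v a, 0 ≤ ξ v a) (h1 : ∀ v a, ξ v a ≤ 1)
    (B T : ℝ) (hB : 0 < B) (hT : 0 ≤ T) (hTB : T ≤ 2 * B) (m : V → ℝ)
    (hm : ∀ v, ∑ a, ξ v a = m v * Fintype.card Ω)
    (hmB : ∑ v ∈ s, m v ≤ B) :
    ((univ.filter fun ω : V → Ω => ∑ v ∈ s, m v + T ≤ ∑ v ∈ s, ξ v (ω v)).card : ℝ) ≤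
      Real.exp (-(T ^ 2 / (4 * B))) * Fintype.card (V → Ω) := by
  classical
  set l : ℝ := T / (2 * B) with hl
  have hl0 : 0 ≤ l := by positivity
  have hl1 : l ≤ 1 := by rw [hl, div_le_one (by positivity)]; exact hTB
  have hΩ : (0 : ℝ) < Fintype.card Ω := by exact_mod_cast Fintype.card_pos
  have hm0 : ∀ v, 0 ≤ m v := by
    intro v
    have : 0 ≤ m v * Fintype.card Ω := by rw [← hm]; exact sum_nonneg fun a _ => h0 v a
    exact nonneg_of_mul_nonneg_left this hΩ
  have step1 : ((univ.filter fun ω : V → Ω => ∑ v ∈ s, m v + T ≤ ∑ v ∈ s, ξ v (ω v)).card : ℝ)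
      ≤ ∑ ω : V → Ω, Real.exp (-(l * (∑ v ∈ s, m v + T))) *
          ∏ v, (if v ∈ s then Real.exp (l * ξ v (ω v)) else 1) := by
    rw [card_filter]
    push_cast
    apply sum_le_sum
    intro ω _
    have e1 : ∏ v, (if v ∈ s then Real.exp (l * ξ v (ω v)) else 1)
        = Real.exp (l * ∑ v ∈ s, ξ v (ω v)) := by
      rw [prod_ite_mem, univ_inter, ← Real.exp_sum, mul_sum]
    rw [e1, ← Real.exp_add]
    split_ifs with h
    · rw [← Real.exp_zero]
      apply Real.exp_le_exp.mpr
      nlinarith [mul_le_mul_of_nonneg_left h hl0]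
    · positivity
  have step2 : ∑ ω : V → Ω, ∏ v, (if v ∈ s then Real.exp (l * ξ v (ω v)) else 1)
      = ∏ v, ∑ a : Ω, (if v ∈ s then Real.exp (l * ξ v a) else 1) := by
    rw [Finset.prod_univ_sum]
    simp
  have step3 : ∏ v, ∑ a : Ω, (if v ∈ s then Real.exp (l * ξ v a) else 1)
      ≤ ∏ v : V, ((if v ∈ s then Real.exp ((l + l ^ 2) * m v) else 1) * (Fintype.card Ω : ℝ)) := by
    apply prod_le_prod
    · intro v _
      apply sum_nonneg; intro a _; split_ifs <;> positivity
    · intro v _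
      split_ifs with hv
      · have : ∀ a ∈ (univ : Finset Ω), Real.exp (l * ξ v a) ≤ 1 + (l + l ^ 2) * ξ v a := by
          intro a _
          have hx0 : 0 ≤ l * ξ v a := mul_nonneg hl0 (h0 v a)
          have hx1 : l * ξ v a ≤ 1 := mul_le_one₀ hl1 (h0 v a) (h1 v a)
          have := Real.abs_exp_sub_one_sub_id_le (x := l * ξ v a) (by rw [abs_of_nonneg hx0]; exact hx1)
          have h2 := (abs_le.mp this).2
          have h3 : ξ v a ^ 2 ≤ ξ v a := by nlinarith [h0 v a, h1 v a]
          nlinarith [mul_le_mul_of_nonneg_left h3 (sq_nonneg l)]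
        calc ∑ a, Real.exp (l * ξ v a) ≤ ∑ a, (1 + (l + l ^ 2) * ξ v a) := sum_le_sum this
          _ = (1 + (l + l ^ 2) * m v) * Fintype.card Ω := by
              rw [sum_add_distrib, ← mul_sum, hm]; simp; ring
          _ ≤ _ := by
              apply mul_le_mul_of_nonneg_right _ hΩ.le
              linarith [Real.add_one_le_exp ((l + l ^ 2) * m v)]
      · simp
  have step4 : ∏ v : V, ((if v ∈ s then Real.exp ((l + l ^ 2) * m v) else 1) * (Fintype.card Ω : ℝ))
      = Real.exp ((l + l ^ 2) * ∑ v ∈ s, m v) * Fintype.card (V → Ω) := by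
    rw [prod_mul_distrib, prod_ite_mem, univ_inter, ← Real.exp_sum, mul_sum]
    simp
  calc _ ≤ _ := step1
    _ = Real.exp (-(l * (∑ v ∈ s, m v + T))) * ∑ ω : V → Ω, ∏ v, (if v ∈ s then Real.exp (l * ξ v (ω v)) else 1) := by
        rw [mul_sum]
    _ ≤ Real.exp (-(l * (∑ v ∈ s, m v + T))) * (Real.exp ((l + l ^ 2) * ∑ v ∈ s, m v) * Fintype.card (V → Ω)) := by
        rw [step2]
        exact mul_le_mul_of_nonneg_left (step3.trans step4.le) (Real.exp_pos _).le
    _ ≤ _ := by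
        rw [← mul_assoc, ← Real.exp_add]
        apply mul_le_mul_of_nonneg_right _ (by positivity)
        apply Real.exp_le_exp.mpr
        have h5 : l ^ 2 * ∑ v ∈ s, m v ≤ l ^ 2 * B := mul_le_mul_of_nonneg_left hmB (sq_nonneg l)
        have h6 : l ^ 2 * B - l * T = -(T ^ 2 / (4 * B)) := by
          rw [hl]; field_simp; ring
        nlinarith

lemma weightedDeg_add_single {V : Type*} [Fintype V] [DecidableEq V] (G : SimpleGraph V)
    [DecidableRel G.Adj] (f : Sym2 V → ℕ) (e : Sym2 V) (he : e ∈ G.edgeSet) (j : ℕ) (a : V) :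
    weightedDeg G (fun e' => f e' + if e' = e then j else 0) a
      = weightedDeg G f a + if a ∈ e then j else 0 := by
  unfold weightedDeg
  rw [sum_add_distrib]
  congr 1
  split_ifs with h
  · obtain ⟨b, rfl⟩ := h
    have hb : G.Adj a b := by simpa using he
    rw [sum_eq_single b]
    · simp [Sym2.eq_swap]
    · intro c _ hc
      rw [if_neg]
      intro h'
      rw [Sym2.eq_iff] at h'
      rcases h' with h' | h'
      · exact hc (h'.1.trans h'.2)
      · exact hc h'.1
    · intro h'
      exact absurd ((G.mem_neighborFinset a b).mpr hb) h'
  · apply sum_eq_zero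
    intro b _
    rw [if_neg]
    rintro rfl
    simp at h

/-- Perturbing the edges incident with `S` one can make the weights on `S` distinct. -/
lemma exists_perturb {V : Type*} [Fintype V] [DecidableEq V] (G : SimpleGraph V)
    [DecidableRel G.Adj] (S : Finset V) (z : Sym2 V → ℕ)
    (hS : ∀ u ∈ S, ∀ v ∈ S, u ≠ v → ∃ e ∈ G.edgeSet, (u ∈ e ∧ v ∉ e) ∨ (v ∈ e ∧ u ∉ e)) :
    ∃ r : Sym2 V → ℕ, (∀ e, r e ≤ 2 * S.card) ∧ (∀ e, (∀ u ∈ S, u ∉ e) → r e = 0) ∧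
      Set.InjOn (weightedDeg G (fun e => z e + r e)) S := by
  classical
  let F : (Sym2 V → Fin (2 * S.card + 1)) → Sym2 V → ℕ := fun r e =>
    z e + if ∃ u ∈ S, u ∈ e then (r e : ℕ) else 0
  let wt : (Sym2 V → Fin (2 * S.card + 1)) → V → ℕ := fun r => weightedDeg G (F r)
  let Φ : (Sym2 V → Fin (2 * S.card + 1)) → Finset (V × V) := fun r =>
    (S ×ˢ S).filter fun p => p.1 ≠ p.2 ∧ wt r p.1 = wt r p.2
  obtain ⟨r, -, hr⟩ := exists_min_image univ (fun r => (Φ r).card) univ_nonempty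
  refine ⟨fun e => if ∃ u ∈ S, u ∈ e then (r e : ℕ) else 0, ?_, ?_, ?_⟩
  · intro e
    dsimp only
    split_ifs
    · have := (r e).2; omega
    · omega
  · intro e he
    dsimp only
    rw [if_neg]
    rintro ⟨u, hu, hue⟩
    exact he u hu hue
  -- main claim
  have key : ∀ u ∈ S, ∀ v ∈ S, ∀ e ∈ G.edgeSet, u ∈ e → v ∉ e → wt r u ≠ wt r v := by
    intro u hu v hv e he hue hve heq
    obtain ⟨w, rfl⟩ := hue
    set e : Sym2 V := s(u, w) with hedef
    have hwt : ∀ (j : Fin (2 * S.card + 1)) (a : V), wt (Function.update r e j) a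
        = wt (Function.update r e 0) a + if a ∈ e then (j : ℕ) else 0 := by
      intro j a
      rw [← weightedDeg_add_single G (F (Function.update r e 0)) e he]
      change weightedDeg G (F (Function.update r e j)) a = _
      congr 1
      funext e'
      by_cases h : e' = e
      · subst h
        have : ∃ x ∈ S, x ∈ e := ⟨u, hu, by simp [hedef]⟩
        simp [F, this]
      · simp [F, h]
    set w0 := wt (Function.update r e 0) with hw0
    let bad : Finset ℕ := S.image (fun z => w0 z - w0 u) ∪ S.image (fun z => w0 z - w0 w)
    have hbad : bad.card < (Finset.range (2 * S.card + 1)).card := by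
      rw [card_range]
      calc bad.card ≤ _ := card_union_le _ _
        _ ≤ S.card + S.card := add_le_add card_image_le card_image_le
        _ < _ := by omega
    obtain ⟨j, hj, hjb⟩ := exists_mem_notMem_of_card_lt_card hbad
    have hj' : j < 2 * S.card + 1 := by simpa using hj
    have h1 := hr (Function.update r e ⟨j, hj'⟩) (mem_univ _)
    have hr0 : ∀ a, wt r a = w0 a + if a ∈ e then (r e : ℕ) else 0 := by
      intro a
      rw [← hwt (r e) a, Function.update_eq_self]
    have hne : ∀ a b, a ∈ S → b ∈ S → a ∈ e → b ∉ e → w0 a + j ≠ w0 b := by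
      intro a b ha hb hae hbe h
      apply hjb
      have : a = u ∨ a = w := by simpa [hedef] using hae
      simp only [bad, mem_union, mem_image]
      rcases this with rfl | rfl
      · left; exact ⟨b, hb, by omega⟩
      · right; exact ⟨b, hb, by omega⟩
    have h2 : Φ (Function.update r e ⟨j, hj'⟩) ⊂ Φ r := by
      rw [Finset.ssubset_iff_of_subset]
      · refine ⟨(u, v), ?_, ?_⟩
        · simp only [Φ, mem_filter, mem_product]
          exact ⟨⟨hu, hv⟩, by rintro rfl; exact hve (by simp [hedef]), heq⟩
        · simp only [Φ, mem_filter, mem_product, not_and]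
          intro _ _
          rw [hwt, hwt, if_pos (by simp [hedef]), if_neg hve]
          exact hne u v hu hv (by simp [hedef]) hve
      · rintro ⟨a, b⟩ hab
        simp only [Φ, mem_filter, mem_product] at hab ⊢
        obtain ⟨⟨ha, hb⟩, hne', hab⟩ := hab
        refine ⟨⟨ha, hb⟩, hne', ?_⟩
        rw [hwt, hwt] at hab
        rw [hr0, hr0]
        by_cases hae : a ∈ e <;> by_cases hbe : b ∈ e
        · simp only [hae, hbe, if_true] at hab ⊢; omega
        · simp only [hae, hbe, if_true, if_false] at hab
          exact absurd hab (hne a b ha hb hae hbe)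
        · simp only [hae, hbe, if_true, if_false] at hab
          exact absurd hab.symm (hne b a hb ha hbe hae)
        · simpa only [hae, hbe, if_false] using hab
    have := card_lt_card h2
    omega
  intro u hu v hv huv
  by_contra hne
  obtain ⟨e, he, h | h⟩ := hS u hu v hv hne
  · exact key u hu v hv e he h.1 h.2 huv
  · exact key v hv u hu e he h.1 h.2 huv.symm

/-- Interval version of Hall's theorem. -/
lemma exists_placement {V : Type*} [DecidableEq V] (W : Finset V) (f : V → ℕ) (E : ℕ)
    (P : ℕ → Prop) [DecidablePred P]
    (h : ∀ x y, x ≤ y → (∃ v ∈ W, f v = x) → (∃ v ∈ W, f v = y) →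
      (W.filter fun v => x ≤ f v ∧ f v ≤ y).card
        ≤ ((Finset.Icc x (y + E)).filter P).card) :
    ∃ t : V → ℕ, Set.InjOn t W ∧ ∀ v ∈ W, P (t v) ∧ f v ≤ t v ∧ t v ≤ f v + E := by
  classical
  let I : W → Finset ℕ := fun v => (Finset.Icc (f v) (f v + E)).filter P
  have hall : ∀ n : ℕ, ∀ T : Finset V, T ⊆ W → T.card = n →
      T.card ≤ (T.biUnion fun v => (Finset.Icc (f v) (f v + E)).filter P).card := by
    intro n
    induction n using Nat.strong_induction_on with
    | _ n ih =>
    intro T hTW hTn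
    rcases T.eq_empty_or_nonempty with rfl | hne
    · simp
    obtain ⟨v0, hv0, hmin⟩ := exists_min_image T f hne
    obtain ⟨v1, hv1, hmax⟩ := exists_max_image T f hne
    have hex : ∃ y, (∃ v ∈ T, f v = y) ∧ ∀ v ∈ T, f v ≤ y ∨ y + E < f v :=
      ⟨f v1, ⟨v1, hv1, rfl⟩, fun v hv => Or.inl (hmax v hv)⟩
    set y := Nat.find hex with hy
    obtain ⟨⟨vy, hvy, hvy'⟩, hgap⟩ := Nat.find_spec hex
    rw [← hy] at hvy' hgap
    have hymin : ∀ y' < y, ¬ ((∃ v ∈ T, f v = y') ∧ ∀ v ∈ T, f v ≤ y' ∨ y' + E < f v) :=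
      fun y' hy' => Nat.find_min hex hy'
    have hxy : f v0 ≤ y := hvy' ▸ hmin vy hvy
    let T1 := T.filter fun v => f v ≤ y
    let T2 := T.filter fun v => ¬ f v ≤ y
    have hcard : T1.card + T2.card = T.card := card_filter_add_card_filter_not _
    have hT1 : T1.card ≤ ((Finset.Icc (f v0) (y + E)).filter P).card := by
      refine le_trans (card_le_card ?_) (h (f v0) y hxy ⟨v0, hTW hv0, rfl⟩ ⟨vy, hTW hvy, hvy'⟩)
      intro v hv
      simp only [T1, mem_filter] at hv ⊢
      exact ⟨hTW hv.1, hmin v hv.1, hv.2⟩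
    have hT2 : T2.card ≤ (T2.biUnion fun v => (Finset.Icc (f v) (f v + E)).filter P).card := by
      apply ih T2.card _ T2 ((filter_subset _ _).trans hTW) rfl
      have : 0 < T1.card := card_pos.mpr ⟨v0, by simp only [T1, mem_filter]; exact ⟨hv0, hxy⟩⟩
      omega
    have hdisj : Disjoint ((Finset.Icc (f v0) (y + E)).filter P)
        (T2.biUnion fun v => (Finset.Icc (f v) (f v + E)).filter P) := by
      rw [Finset.disjoint_left]
      intro a ha hb
      simp only [mem_filter, mem_biUnion, Finset.mem_Icc, T2] at ha hb
      obtain ⟨v, ⟨hv, hv2⟩, hv3, -⟩ := hb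
      rcases hgap v hv with h' | h' <;> omega
    have hsub : ((Finset.Icc (f v0) (y + E)).filter P) ∪
        (T2.biUnion fun v => (Finset.Icc (f v) (f v + E)).filter P) ⊆
        (T.biUnion fun v => (Finset.Icc (f v) (f v + E)).filter P) := by
      apply union_subset
      · intro a ha
        simp only [mem_filter, Finset.mem_Icc, mem_biUnion] at ha ⊢
        obtain ⟨⟨ha1, ha2⟩, hP⟩ := ha
        obtain ⟨u, hu, humax⟩ := exists_max_image (T.filter fun v => f v ≤ a) f
          ⟨v0, by simp only [mem_filter]; exact ⟨hv0, ha1⟩⟩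
        simp only [mem_filter] at hu humax
        refine ⟨u, hu.1, ⟨hu.2, ?_⟩, hP⟩
        by_contra hcon
        push Not at hcon
        have huy : f u < y := by
          by_contra h'
          omega
        apply hymin (f u) huy
        refine ⟨⟨u, hu.1, rfl⟩, ?_⟩
        intro v hv
        by_cases hva : f v ≤ a
        · left; exact humax v ⟨hv, hva⟩
        · right; omega
      · exact biUnion_subset_biUnion_of_subset_left _ (filter_subset _ _)
    calc T.card = T1.card + T2.card := hcard.symm
      _ ≤ _ := add_le_add hT1 hT2
      _ = _ := (card_union_of_disjoint hdisj).symm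
      _ ≤ _ := card_le_card hsub
  have := (Finset.all_card_le_biUnion_card_iff_exists_injective I).mp (by
    intro s
    have h1 := hall _ (s.map (Function.Embedding.subtype _)) (by
      intro v hv
      simp only [mem_map, Function.Embedding.coe_subtype] at hv
      obtain ⟨a, -, rfl⟩ := hv
      exact a.2) rfl
    rw [card_map] at h1
    refine h1.trans (card_le_card ?_)
    intro a ha
    simp only [mem_biUnion, mem_map, Function.Embedding.coe_subtype] at ha ⊢
    obtain ⟨v, ⟨w, hw, rfl⟩, hv⟩ := ha
    exact ⟨w, hw, hv⟩)
  obtain ⟨g, hg, hgI⟩ := this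
  refine ⟨fun v => if hv : v ∈ W then g ⟨v, hv⟩ else 0, ?_, ?_⟩
  · intro a ha b hb hab
    have ha' : a ∈ W := ha
    have hb' : b ∈ W := hb
    simp only [ha', hb', dif_pos] at hab
    exact congrArg Subtype.val (hg hab)
  · intro v hv
    simp only [hv, dif_pos]
    have := hgI ⟨v, hv⟩
    simp only [I, mem_filter, Finset.mem_Icc] at this
    exact ⟨this.2, this.1.1, this.1.2⟩

/-- Counting integers in an interval lying in prescribed blocks. -/
lemma card_blocks (K M : ℕ) (hK : 0 < K) (R : Finset ℕ) (hR : R ⊆ Finset.range M)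
    (x y : ℕ) (hxy : x ≤ y) :
    R.card * (y - x) ≤ M * (((Finset.Icc x y).filter fun t => (t / K) % M ∈ R).card + R.card * K) := by
  classical
  rcases Nat.eq_zero_or_pos M with rfl | hM
  · have : R = ∅ := by simpa using hR
    simp [this]
  set p : ℕ → Prop := fun t => (t / K) % M ∈ R with hp
  have hper : Function.Periodic p (M * K) := by
    intro t
    simp only [hp]
    rw [Nat.add_mul_div_right _ _ hK, Nat.add_mod_right]
  have hcount : ∀ a, R.card * K ≤ ((Finset.Ico a (a + M * K)).filter p).card := by
    intro a
    rw [Nat.filter_Ico_card_eq_of_periodic a (M * K) p hper, Nat.count_eq_card_filter_range]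
    have hprod : R.card * K = (R ×ˢ Finset.range K).card := by rw [card_product, card_range]
    rw [hprod]
    apply card_le_card_of_injOn (fun ab => ab.1 * K + ab.2)
    · rintro ⟨a, b⟩ hab
      simp only [coe_product, Set.mem_prod, mem_coe, Finset.mem_range] at hab
      have ha : a < M := by simpa using hR hab.1
      simp only [coe_filter, Set.mem_ofPred_eq, Finset.mem_range, hp]
      constructor
      · nlinarith [hab.2]
      · rw [show a * K + b = b + K * a by ring, Nat.add_mul_div_left _ _ hK,
          Nat.div_eq_of_lt hab.2, zero_add, Nat.mod_eq_of_lt ha]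
        exact hab.1
    · rintro ⟨a, b⟩ hab ⟨a', b'⟩ hab' h
      simp only [coe_product, Set.mem_prod, mem_coe, Finset.mem_range] at hab hab'
      simp only at h
      have h1 : (a * K + b) / K = (a' * K + b') / K := by rw [h]
      rw [show a * K + b = b + K * a by ring, show a' * K + b' = b' + K * a' by ring,
        Nat.add_mul_div_left _ _ hK, Nat.add_mul_div_left _ _ hK, Nat.div_eq_of_lt hab.2,
        Nat.div_eq_of_lt hab'.2] at h1
      have : a = a' := by omega
      subst this
      simp at h
      simp [h]
  have hmulti : ∀ j a, j * (R.card * K) ≤ ((Finset.Ico a (a + j * (M * K))).filter p).card := by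
    intro j
    induction j with
    | zero => intro a; simp
    | succ j ih =>
      intro a
      have hu : (Finset.Ico a (a + j * (M * K))).filter p ∪
          (Finset.Ico (a + j * (M * K)) (a + j * (M * K) + M * K)).filter p
          ⊆ (Finset.Ico a (a + (j + 1) * (M * K))).filter p := by
        rw [← filter_union]
        apply filter_subset_filter
        intro t ht
        simp only [mem_union, Finset.mem_Ico] at ht ⊢
        have : (j + 1) * (M * K) = j * (M * K) + M * K := by ring
        omega
      have hd : Disjoint ((Finset.Ico a (a + j * (M * K))).filter p)
          ((Finset.Ico (a + j * (M * K)) (a + j * (M * K) + M * K)).filter p) := by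
        rw [Finset.disjoint_left]
        intro t ht ht'
        simp only [mem_filter, Finset.mem_Ico] at ht ht'
        omega
      calc (j + 1) * (R.card * K) = j * (R.card * K) + R.card * K := by ring
        _ ≤ _ := add_le_add (ih a) (hcount _)
        _ = _ := (card_union_of_disjoint hd).symm
        _ ≤ _ := card_le_card hu
  have hMK : 0 < M * K := Nat.mul_pos hM hK
  set j := (y - x) / (M * K) with hj
  have hj1 : j * (M * K) ≤ y - x := Nat.div_mul_le_self _ _
  have hj2 : y - x < (j + 1) * (M * K) := by
    rw [hj, add_mul, one_mul]; exact Nat.lt_div_mul_add hMK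
  have h3 : j * (R.card * K) ≤ ((Finset.Icc x y).filter p).card := by
    refine (hmulti j x).trans (card_le_card (filter_subset_filter _ ?_))
    intro t ht
    simp only [Finset.mem_Ico, Finset.mem_Icc] at ht ⊢
    omega
  calc R.card * (y - x) ≤ R.card * ((j + 1) * (M * K)) := Nat.mul_le_mul_left _ hj2.le
    _ = M * (j * (R.card * K) + R.card * K) := by ring
    _ ≤ _ := Nat.mul_le_mul_left _ (Nat.add_le_add_right (h3.trans (by apply le_of_eq; congr)) _)

/-- Distribute a total over a finite set with bounded summands. -/
lemma exists_distribution {V : Type*} [DecidableEq V] (s : Finset V) (K : ℕ) :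
    ∀ a : ℕ, a ≤ s.card * K → ∃ g : V → ℕ, (∀ v, g v ≤ K) ∧ ∑ v ∈ s, g v = a := by
  induction s using Finset.induction_on with
  | empty => intro a ha; exact ⟨fun _ => 0, by simp, by simp at ha; simp [ha]⟩
  | insert v s hv ih =>
    intro a ha
    rw [card_insert_of_notMem hv, add_mul, one_mul] at ha
    obtain ⟨g, hg, hs⟩ := ih (a - min a K) (by omega)
    refine ⟨Function.update g v (min a K), ?_, ?_⟩
    · intro u
      by_cases h : u = v
      · subst h; simp
      · simp [h, hg]
    · rw [sum_insert hv, Function.update_self, sum_congr rfl (g := g), hs]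
      · omega
      · intro u hu
        rw [Function.update_of_ne]
        rintro rfl; exact hv hu

/-- Passing to a bipartite core with large minimum degrees. -/
lemma exists_core {V : Type*} [DecidableEq V] (C D : Finset V) (adj : V → V → Prop)
    [DecidableRel adj] (hC hD : V → ℝ) :
    ∃ C' D' : Finset V, C' ⊆ C ∧ D' ⊆ D ∧
      (∀ c ∈ C', hC c / 4 ≤ ((D'.filter fun d => adj c d).card : ℝ)) ∧
      (∀ d ∈ D', hD d / 4 ≤ ((C'.filter fun c => adj c d).card : ℝ)) ∧
      2 * (∑ c ∈ C \ C', ((D.filter fun d => adj c d).card : ℝ) +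
        ∑ d ∈ D \ D', ((C.filter fun c => adj c d).card : ℝ)) ≤
        ∑ c ∈ C \ C', hC c + ∑ d ∈ D \ D', hD d := by
  classical
  let a : V → V → ℝ := fun c d => if adj c d then 1 else 0
  have ha : ∀ c d, 0 ≤ a c d := fun c d => by simp only [a]; split_ifs <;> norm_num
  have hrow : ∀ (c : V) (Y : Finset V), ((Y.filter fun d => adj c d).card : ℝ) = ∑ d ∈ Y, a c d := by
    intro c Y; simp [a]
  have hcol : ∀ (d : V) (X : Finset V), ((X.filter fun c => adj c d).card : ℝ) = ∑ c ∈ X, a c d := by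
    intro d X; simp [a]
  let e : Finset V → Finset V → ℝ := fun X Y => ∑ c ∈ X, ∑ d ∈ Y, a c d
  let Φ : Finset V × Finset V → ℝ := fun p =>
    e p.1 p.2 - (1 / 4) * (∑ c ∈ p.1, hC c + ∑ d ∈ p.2, hD d)
  obtain ⟨⟨C', D'⟩, hmem, hmax⟩ := exists_max_image (C.powerset ×ˢ D.powerset) Φ
    ⟨(C, D), by simp⟩
  simp only [mem_product, mem_powerset] at hmem
  refine ⟨C', D', hmem.1, hmem.2, ?_, ?_, ?_⟩
  · intro c hc
    have h1 := hmax (C'.erase c, D') (by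
      simp only [mem_product, mem_powerset]
      exact ⟨(erase_subset _ _).trans hmem.1, hmem.2⟩)
    simp only [Φ, e] at h1
    rw [← add_sum_erase C' _ hc, ← add_sum_erase C' hC hc] at h1
    rw [hrow]
    linarith
  · intro d hd
    have h1 := hmax (C', D'.erase d) (by
      simp only [mem_product, mem_powerset]
      exact ⟨hmem.1, (erase_subset _ _).trans hmem.2⟩)
    simp only [Φ, e] at h1
    rw [sum_comm, sum_comm (s := C') (t := D'), ← add_sum_erase D' _ hd,
      ← add_sum_erase D' hD hd] at h1
    rw [hcol]
    linarith
  · have h1 := hmax (C, D) (by simp)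
    simp only [Φ] at h1
    simp only [hrow, hcol]
    have s1 : ∀ f : V → ℝ, ∑ c ∈ C, f c = ∑ c ∈ C \ C', f c + ∑ c ∈ C', f c :=
      fun f => (sum_sdiff hmem.1).symm
    have s2 : ∀ f : V → ℝ, ∑ c ∈ D, f c = ∑ c ∈ D \ D', f c + ∑ c ∈ D', f c :=
      fun f => (sum_sdiff hmem.2).symm
    have e1 : e C D = e (C \ C') D + e C' (D \ D') + e C' D' := by
      simp only [e]
      rw [s1]
      conv_lhs => rw [add_comm]
      conv_lhs => enter [1, 2, c]; rw [s2]
      rw [sum_add_distrib]; ring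
    have e2 : e C D = e C (D \ D') + e (C \ C') D' + e C' D' := by
      simp only [e]
      conv_lhs => enter [2, c]; rw [s2]
      rw [sum_add_distrib, s1 (fun c => ∑ d ∈ D', a c d)]; ring
    have p1 : 0 ≤ e C' (D \ D') := sum_nonneg fun c _ => sum_nonneg fun d _ => ha c d
    have p2 : 0 ≤ e (C \ C') D' := sum_nonneg fun c _ => sum_nonneg fun d _ => ha c d
    have e3 : ∑ d ∈ D \ D', ∑ c ∈ C, a c d = e C (D \ D') := sum_comm
    rw [e3, s1 hC, s2 hD] at *
    change 2 * (e (C \ C') D + e C (D \ D')) ≤ _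
    linarith

/-- Shifting residues so that there are few conflicts. -/
lemma exists_shift {V I : Type*} [DecidableEq V] [Fintype I] [DecidableEq I] (K : ℕ) [NeZero K]
    (T : Finset V) (g : V → ZMod K) (a b : I → V) :
    ∃ x : I → ZMod K, ∀ i, a i ≠ b i → a i ∈ T →
      K * (T.filter fun u => u ≠ a i ∧
        g u + ∑ j, x j * ((if u = a j then 1 else 0) - (if u = b j then 1 else 0)) =
        g (a i) + ∑ j, x j * ((if a i = a j then 1 else 0) - (if a i = b j then 1 else 0))).card
        ≤ 2 * T.card + K := by
  classical
  let Γ : (I → ZMod K) → V → ZMod K := fun x u =>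
    g u + ∑ j, x j * ((if u = a j then 1 else 0) - (if u = b j then 1 else 0))
  let Φ : (I → ZMod K) → ℕ := fun x =>
    ((T ×ˢ T).filter fun p => p.1 ≠ p.2 ∧ Γ x p.1 = Γ x p.2).card
  obtain ⟨x, -, hx⟩ := exists_min_image univ Φ univ_nonempty
  refine ⟨x, ?_⟩
  intro i hab haT
  change K * (T.filter fun u => u ≠ a i ∧ Γ x u = Γ x (a i)).card ≤ _
  set a0 := a i with ha0
  set b0 := b i with hb0
  let X : ZMod K → I → ZMod K := fun t => Function.update x i (x i + t)
  have hΓ : ∀ t u, Γ (X t) u = Γ x u + t * ((if u = a0 then 1 else 0) - (if u = b0 then 1 else 0)) := by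
    intro t u
    simp only [Γ, X]
    rw [← add_sum_erase univ _ (mem_univ i), ← add_sum_erase univ (fun j => x j * _) (mem_univ i)]
    rw [Function.update_self, sum_congr rfl (g := fun j => x j *
      ((if u = a j then 1 else 0) - (if u = b j then 1 else 0)))]
    · ring
    · intro j hj
      rw [Function.update_of_ne (ne_of_mem_erase hj)]
  -- touching pairs
  let tch : V × V → Prop := fun p => p.1 = a0 ∨ p.1 = b0 ∨ p.2 = a0 ∨ p.2 = b0
  let R : ZMod K → ℕ := fun t =>
    (((T ×ˢ T).filter tch).filter fun p => p.1 ≠ p.2 ∧ Γ (X t) p.1 = Γ (X t) p.2).card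
  let R' : ZMod K → ℕ := fun t =>
    (((T ×ˢ T).filter fun p => ¬ tch p).filter fun p => p.1 ≠ p.2 ∧ Γ (X t) p.1 = Γ (X t) p.2).card
  have hsplit : ∀ t, Φ (X t) = R t + R' t := by
    intro t
    simp only [Φ, R, R']
    rw [filter_filter, filter_filter, ← card_union_of_disjoint]
    · congr 1
      ext p
      simp only [mem_filter, mem_union]
      tauto
    · rw [Finset.disjoint_left]
      intro p hp hp'
      simp only [mem_filter] at hp hp'
      exact hp'.2.1 hp.2.1
  have hR' : ∀ t, R' t = R' 0 := by
    intro t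
    simp only [R']
    congr 1
    apply filter_congr
    intro p hp
    simp only [mem_filter, tch, not_or] at hp
    obtain ⟨-, h1, h2, h3, h4⟩ := hp
    rw [hΓ, hΓ, hΓ, hΓ]
    simp [h1, h2, h3, h4]
  have hX0 : X 0 = x := by simp [X]
  have hmin : ∀ t, R 0 ≤ R t := by
    intro t
    have := hx (X t) (mem_univ _)
    have h0 := hsplit 0
    rw [hX0] at h0
    rw [h0, hsplit, hR' t] at this
    omega
  have hsum : ∑ t, R t ≤ 4 * T.card + 2 * K := by
    have h1 : ∑ t, R t = ∑ p ∈ (T ×ˢ T).filter tch,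
        (univ.filter fun t : ZMod K => p.1 ≠ p.2 ∧ Γ (X t) p.1 = Γ (X t) p.2).card := by
      simp only [R, card_filter]
      rw [sum_comm]
    rw [h1]
    have h2 : ∀ p ∈ (T ×ˢ T).filter tch,
        (univ.filter fun t : ZMod K => p.1 ≠ p.2 ∧ Γ (X t) p.1 = Γ (X t) p.2).card ≤
        1 + ((if p = (a0, b0) then K else 0) + (if p = (b0, a0) then K else 0)) := by
      rintro ⟨u, v⟩ hp
      by_cases e1 : (u, v) = (a0, b0)
      · rw [if_pos e1]
        refine (card_le_univ _).trans ?_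
        rw [ZMod.card]; omega
      by_cases e2 : (u, v) = (b0, a0)
      · rw [if_pos e2]
        refine (card_le_univ _).trans ?_
        rw [ZMod.card]; omega
      rw [if_neg e1, if_neg e2, add_zero, add_zero, card_le_one]
      intro t ht s hs
      simp only [mem_filter, mem_univ, true_and] at ht hs hp
      rw [hΓ, hΓ] at ht hs
      have huv := ht.1
      have ht := ht.2
      have hs := hs.2
      have hp := hp.2
      simp only [tch] at hp
      simp only [Prod.mk.injEq] at e1 e2
      have hba : b0 ≠ a0 := fun h => hab h.symm
      by_cases ua : u = a0
      · have ub : u ≠ b0 := by rw [ua]; exact hab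
        have va : v ≠ a0 := by rw [← ua]; exact fun h => huv h.symm
        have vb : v ≠ b0 := fun h => e1 ⟨ua, h⟩
        simp only [if_pos ua, if_neg ub, if_neg va, if_neg vb] at ht hs
        linear_combination ht - hs
      · by_cases ub : u = b0
        · have va : v ≠ a0 := fun h => e2 ⟨ub, h⟩
          have vb : v ≠ b0 := by rw [← ub]; exact fun h => huv h.symm
          simp only [if_neg ua, if_pos ub, if_neg va, if_neg vb] at ht hs
          linear_combination hs - ht
        · by_cases va : v = a0
          · have vb : v ≠ b0 := by rw [va]; exact hab
            simp only [if_neg ua, if_neg ub, if_pos va, if_neg vb] at ht hs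
            linear_combination hs - ht
          · have vb : v = b0 := by tauto
            simp only [if_neg ua, if_neg ub, if_neg va, if_pos vb] at ht hs
            linear_combination ht - hs
    refine (sum_le_sum h2).trans ?_
    rw [sum_add_distrib, sum_add_distrib]
    have h3 : ((T ×ˢ T).filter tch).card ≤ 4 * T.card := by
      have hsub : (T ×ˢ T).filter tch ⊆
          (({a0, b0} : Finset V) ×ˢ T) ∪ (T ×ˢ ({a0, b0} : Finset V)) := by
        rintro ⟨u, v⟩ hp
        simp only [mem_filter, mem_product, tch] at hp
        simp only [mem_union, mem_product, mem_insert, mem_singleton]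
        tauto
      refine (card_le_card hsub).trans ((card_union_le _ _).trans ?_)
      rw [card_product, card_product, card_pair hab]
      omega
    have h4 : ∀ (s : Finset (V × V)) (p0 : V × V), ∑ p ∈ s, (if p = p0 then K else 0) ≤ K := by
      intro s p0
      rw [sum_ite_eq']
      split_ifs <;> omega
    have h5 := h4 ((T ×ˢ T).filter tch) (a0, b0)
    have h6 := h4 ((T ×ˢ T).filter tch) (b0, a0)
    rw [← card_eq_sum_ones]
    omega
  have hKR : K * R 0 ≤ ∑ t, R t := by
    calc K * R 0 = ∑ t : ZMod K, R 0 := by rw [sum_const, card_univ, ZMod.card, smul_eq_mul]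
      _ ≤ _ := sum_le_sum fun t _ => hmin t
  have hconf : 2 * (T.filter fun u => u ≠ a0 ∧ Γ x u = Γ x a0).card ≤ R 0 := by
    set U := T.filter fun u => u ≠ a0 ∧ Γ x u = Γ x a0 with hU
    have hsub : (U ×ˢ {a0}) ∪ (({a0} : Finset V) ×ˢ U) ⊆
      (((T ×ˢ T).filter tch).filter fun p => p.1 ≠ p.2 ∧ Γ (X 0) p.1 = Γ (X 0) p.2) := by
      rw [hX0]
      rintro ⟨u, v⟩ hp
      simp only [mem_union, mem_product, mem_singleton, hU, mem_filter] at hp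
      simp only [mem_filter, mem_product, tch]
      rcases hp with ⟨⟨h1, h2, h3⟩, h4⟩ | ⟨h4, h1, h2, h3⟩
      · rw [h4]; exact ⟨⟨⟨h1, haT⟩, by tauto⟩, h2, h3⟩
      · rw [h4]; exact ⟨⟨⟨haT, h1⟩, by tauto⟩, h2.symm, h3.symm⟩
    have hd : Disjoint (U ×ˢ {a0}) (({a0} : Finset V) ×ˢ U) := by
      rw [Finset.disjoint_left]
      rintro ⟨u, v⟩ h1 h2
      simp only [mem_product, mem_singleton, hU, mem_filter] at h1 h2
      exact h1.1.2.1 h2.1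
    have := card_le_card hsub
    rw [card_union_of_disjoint hd, card_product, card_product, card_singleton] at this
    simp only [R]
    omega
  have : K * (2 * (T.filter fun u => u ≠ a0 ∧ Γ x u = Γ x a0).card) ≤ 4 * T.card + 2 * K :=
    (Nat.mul_le_mul_left K hconf).trans (hKR.trans hsum)
  nlinarith

/-- Sequential toggling. -/
lemma exists_toggle {V : Type*} [DecidableEq V] (C D S : Finset V)
    (adj : V → V → Prop) [DecidableRel adj] (K M : ℕ) (hK : 0 < K) (hM : 3 ≤ M) (g : V → ℤ)
    (hconf : ∀ d ∈ D, M * (((D ∪ S).filter fun u => u ≠ d ∧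
      ((g u : ℤ) : ZMod K) = ((g d : ℤ) : ZMod K)).card + 1) ≤
        (C.filter fun c => adj c d).card + 1) :
    ∃ χ : V → V → ℤ, (∀ c d, χ c d ≠ 0 → c ∈ C ∧ d ∈ D ∧ adj c d) ∧
      (∀ c d, |χ c d| ≤ 1) ∧ (∀ c, ∑ d ∈ D, χ c d = 0 ∨ ∑ d ∈ D, χ c d = 1) ∧
      (∀ d ∈ D, ((g d + K * ∑ c ∈ C, χ c d) / K) % M = 2) ∧
      (∀ d ∈ D, ∀ u ∈ D ∪ S, u ≠ d →
        g u + K * ∑ c ∈ C, χ c u ≠ g d + K * ∑ c ∈ C, χ c d) := by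
  classical
  suffices H : ∀ P : Finset V, P ⊆ D → ∃ χ : V → V → ℤ,
      (∀ c d, χ c d ≠ 0 → c ∈ C ∧ d ∈ P ∧ adj c d) ∧
      (∀ c d, |χ c d| ≤ 1) ∧ (∀ c, ∑ d ∈ D, χ c d = 0 ∨ ∑ d ∈ D, χ c d = 1) ∧
      (∀ d ∈ P, ((g d + K * ∑ c ∈ C, χ c d) / K) % M = 2) ∧
      (∀ d ∈ P, ∀ u ∈ P ∪ S, u ≠ d →
        g u + K * ∑ c ∈ C, χ c u ≠ g d + K * ∑ c ∈ C, χ c d) from H D subset_rfl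
  intro P
  induction P using Finset.induction_on with
  | empty => intro _; exact ⟨fun _ _ => 0, by simp, by simp, by simp, by simp, by simp⟩
  | insert d P hdP ih =>
  intro hPD
  obtain ⟨χ, hsupp, habs, hrow, hblk, hdist⟩ := ih ((subset_insert _ _).trans hPD)
  have hdD : d ∈ D := hPD (mem_insert_self _ _)
  have hPD' : P ⊆ D := (subset_insert _ _).trans hPD
  have hχd : ∀ c, χ c d = 0 := by
    intro c
    by_contra h
    exact hdP (hsupp c d h).2.1
  have hKz : (0 : ℤ) < K := by exact_mod_cast hK
  have hMz : (0 : ℤ) < M := by exact_mod_cast (by omega : 0 < M)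
  let σ : V → ℤ := fun c => ∑ u ∈ D, χ c u
  set N := C.filter fun c => adj c d with hN
  let F : V → ℤ := fun u => g u + K * ∑ c ∈ C, χ c u
  set Cf := (D ∪ S).filter fun u => u ≠ d ∧ ((g u : ℤ) : ZMod K) = ((g d : ℤ) : ZMod K) with hCf
  have hm := hconf d hdD
  rw [← hCf, ← hN] at hm
  set base : ℤ := g d - K * ∑ c ∈ N, σ c with hbase
  -- first good index
  set i0 : ℕ := ((2 - base / K) % M).toNat with hi0
  have hi0' : (i0 : ℤ) = (2 - base / K) % M := Int.toNat_of_nonneg (Int.emod_nonneg _ hMz.ne')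
  have hi0M : i0 < M := by
    have := Int.emod_lt_of_pos (2 - base / K) hMz
    rw [← hi0'] at this
    exact_mod_cast this
  let val : ℕ → ℤ := fun j => base + K * (i0 + M * j : ℕ)
  have hinj : Set.InjOn val (range (Cf.card + 1)) := by
    intro i _ j _ h
    simp only [val] at h
    have h1 : (K : ℤ) * (i0 + M * i : ℕ) = K * (i0 + M * j : ℕ) := by linarith
    have h2 := mul_left_cancel₀ hKz.ne' h1
    have h3 : i0 + M * i = i0 + M * j := by exact_mod_cast h2
    have h4 : M * i = M * j := by omega
    exact Nat.eq_of_mul_eq_mul_left (by omega) h4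
  obtain ⟨v, hv, hv'⟩ : ∃ v ∈ (range (Cf.card + 1)).image val, v ∉ Cf.image F := by
    apply exists_mem_notMem_of_card_lt_card
    rw [card_image_of_injOn hinj, card_range]
    exact Nat.lt_succ_of_le card_image_le
  obtain ⟨j, hj, rfl⟩ := mem_image.mp hv
  rw [Finset.mem_range] at hj
  have him : i0 + M * j ≤ N.card := by
    have : M * (j + 1) ≤ M * (Cf.card + 1) := Nat.mul_le_mul_left _ (by omega)
    rw [mul_add, mul_one] at this
    omega
  obtain ⟨X, hXN, hXc⟩ := exists_subset_card_eq him
  let χ' : V → V → ℤ := fun c u => if u = d then (if c ∈ N then (if c ∈ X then 1 else 0) - σ c else 0)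
    else χ c u
  have hχ'ne : ∀ c u, u ≠ d → χ' c u = χ c u := fun c u h => by simp [χ', h]
  have hF'ne : ∀ u, u ≠ d → g u + K * ∑ c ∈ C, χ' c u = F u := by
    intro u hu
    simp only [F]
    rw [sum_congr rfl fun c _ => hχ'ne c u hu]
  have hF'd : g d + K * ∑ c ∈ C, χ' c d = val j := by
    have : ∑ c ∈ C, χ' c d = (i0 + M * j : ℕ) - ∑ c ∈ N, σ c := by
      simp only [χ', if_true]
      rw [← sum_filter]
      have : C.filter (fun c => c ∈ N) = N := by
        ext c; simp [hN]
      rw [this, sum_sub_distrib, ← hXc]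
      congr 1
      rw [sum_ite_mem, inter_eq_right.mpr hXN]
      simp
    rw [this]
    simp only [val, hbase]
    ring
  have hcast : ∀ u, ((F u : ℤ) : ZMod K) = ((g u : ℤ) : ZMod K) := by
    intro u; simp [F]
  have hvcast : ((val j : ℤ) : ZMod K) = ((g d : ℤ) : ZMod K) := by
    simp [val, hbase]
  have hnew : ∀ u ∈ D ∪ S, u ≠ d → F u ≠ val j := by
    intro u hu hud h
    apply hv'
    rw [mem_image]
    refine ⟨u, ?_, h⟩
    rw [hCf, mem_filter]
    refine ⟨hu, hud, ?_⟩
    rw [← hcast, h, hvcast]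
  refine ⟨χ', ?_, ?_, ?_, ?_, ?_⟩
  · intro c u h
    by_cases hu : u = d
    · subst hu
      have hcN : c ∈ N := by
        by_contra hc; simp [χ', hc] at h
      have := (mem_filter.mp hcN)
      exact ⟨this.1, mem_insert_self _ _, this.2⟩
    · rw [hχ'ne c u hu] at h
      obtain ⟨h1, h2, h3⟩ := hsupp c u h
      exact ⟨h1, mem_insert_of_mem h2, h3⟩
  · intro c u
    by_cases hu : u = d
    · simp only [χ', hu, if_true]
      split_ifs
      · rcases hrow c with h | h <;> simp [σ, h]
      · rcases hrow c with h | h <;> simp [σ, h]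
      · simp
    · rw [hχ'ne c u hu]; exact habs c u
  · intro c
    have h1 : ∑ u ∈ D, χ' c u = σ c + χ' c d := by
      rw [← add_sum_erase D _ hdD]
      simp only [σ]
      rw [← add_sum_erase D (χ c) hdD, hχd, zero_add, add_comm]
      congr 1
      exact sum_congr rfl fun u hu => hχ'ne c u (ne_of_mem_erase hu)
    rw [h1]
    simp only [χ', if_true]
    split_ifs
    · right; ring
    · left; ring
    · rw [add_zero]; exact hrow c
  · intro u hu
    rw [mem_insert] at hu
    by_cases hud : u = d
    · subst hud
      rw [hF'd]
      simp only [val]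
      rw [Int.add_mul_ediv_left _ _ hKz.ne']
      push_cast
      rw [hi0', ← add_assoc, Int.add_mul_emod_self_left, Int.add_emod_emod, add_sub_cancel]
      exact Int.emod_eq_of_lt (by norm_num) (by exact_mod_cast hM)
    · rw [hF'ne u hud]
      exact hblk u (hu.resolve_left hud)
  · intro u hu w hw hwu
    rw [mem_insert] at hu
    rw [insert_union, mem_insert] at hw
    have hsubPS : P ∪ S ⊆ D ∪ S := union_subset_union_left hPD'
    by_cases hud : u = d
    · rw [hud] at hwu ⊢
      rw [hF'd, hF'ne w hwu]
      exact hnew w (hsubPS (hw.resolve_left hwu)) hwu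
    · rw [hF'ne u hud]
      by_cases hwd : w = d
      · rw [hwd, hF'd]
        exact (hnew u (mem_union_left _ (hPD' (hu.resolve_left hud))) hud).symm
      · rw [hF'ne w hwd]
        exact hdist u (hu.resolve_left hud) w (hw.resolve_left hwd) hwu

lemma exists_derange {V : Type*} [DecidableEq V] [Fintype V] (s : Finset V) (hs : 2 ≤ s.card) :
    ∃ σ : Equiv.Perm V, (∀ v ∈ s, σ v ≠ v) ∧ ∀ v, v ∉ s → σ v = v := by
  obtain ⟨f, hf, hsupp⟩ := s.exists_cycleOn
  refine ⟨f, fun v hv => hf.apply_ne ?_ hv, fun v hv => ?_⟩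
  · exact one_lt_card_iff_nontrivial.mp (by omega)
  · by_contra h
    exact hv (hsupp (Equiv.Perm.mem_support.mpr h))

lemma exists_shift_edges {V : Type*} [DecidableEq V] [Fintype V] (C D S : Finset V)
    (adj : V → V → Prop) [DecidableRel adj] (K : ℕ) (hK : 0 < K) (g : V → ℤ)
    (h2 : ∀ c ∈ C, 2 ≤ (D.filter fun d => adj c d).card)
    (h1 : ∀ d ∈ D, ∃ c ∈ C, adj c d) :
    ∃ φ : V → V → ℤ, (∀ c d, φ c d ≠ 0 → c ∈ C ∧ d ∈ D ∧ adj c d) ∧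
      (∀ c d, |φ c d| ≤ K) ∧ (∀ c, ∑ d, φ c d = 0) ∧
      ∀ d ∈ D, K * ((D ∪ S).filter fun u => u ≠ d ∧
        ((g u + ∑ c, φ c u : ℤ) : ZMod K) = ((g d + ∑ c, φ c d : ℤ) : ZMod K)).card
          ≤ 2 * (D ∪ S).card + K := by
  classical
  haveI : NeZero K := ⟨hK.ne'⟩
  have hσ : ∀ c, ∃ σ : Equiv.Perm V, (∀ d, c ∈ C → d ∈ D → adj c d → σ d ≠ d) ∧
      ∀ d, ¬ (c ∈ C ∧ d ∈ D ∧ adj c d) → σ d = d := by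
    intro c
    by_cases hc : c ∈ C
    · obtain ⟨σ, ha, hb⟩ := exists_derange _ (h2 c hc)
      refine ⟨σ, fun d _ hd hcd => ha d (by simp [hd, hcd]), fun d hd => hb d ?_⟩
      simpa [hc] using hd
    · exact ⟨1, fun d h => absurd h hc, fun d _ => rfl⟩
  choose σ hσ1 hσ2 using hσ
  obtain ⟨x, hx⟩ := exists_shift K (D ∪ S) (fun u => ((g u : ℤ) : ZMod K))
    (fun p : V × V => p.2) (fun p => σ p.1 p.2)
  have hσ3 : ∀ c d, ¬ (c ∈ C ∧ d ∈ D ∧ adj c d) → (σ c).symm d = d := by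
    intro c d h
    rw [Equiv.symm_apply_eq, hσ2 c d h]
  let φ : V → V → ℤ := fun c d => ((x (c, d)).val : ℤ) - ((x (c, (σ c).symm d)).val : ℤ)
  have hcast : ∀ u, ((g u + ∑ c, φ c u : ℤ) : ZMod K) = ((g u : ℤ) : ZMod K) +
      ∑ p : V × V, x p * ((if u = p.2 then 1 else 0) - (if u = σ p.1 p.2 then 1 else 0)) := by
    intro u
    push_cast
    congr 1
    rw [Fintype.sum_prod_type]
    apply sum_congr rfl
    intro c _
    simp only [φ]
    push_cast
    simp only [mul_sub, mul_ite, mul_one, mul_zero, sum_sub_distrib, ZMod.natCast_val, ZMod.cast_id', id]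
    congr 1
    · rw [sum_ite_eq]; simp
    · rw [sum_eq_single ((σ c).symm u)]
      · simp
      · intro b _ hb
        rw [if_neg]
        rintro rfl
        simp at hb
      · simp
  refine ⟨φ, ?_, ?_, ?_, ?_⟩
  · intro c d h
    by_contra hcon
    simp [φ, hσ3 c d hcon] at h
  · intro c d
    have a1 := (x (c, d)).val_lt
    have a2 := (x (c, (σ c).symm d)).val_lt
    simp only [φ]
    rw [abs_le]
    constructor <;> omega
  · intro c
    simp only [φ, sum_sub_distrib]
    rw [Equiv.sum_comp (σ c).symm (fun d => ((x (c, d)).val : ℤ)), sub_self]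
  · intro d hd
    obtain ⟨c, hc, hcd⟩ := h1 d hd
    have := hx (c, d) (hσ1 c d hc hd hcd).symm (mem_union_left _ hd)
    simp only [hcast]
    exact this

lemma weightedDeg_modify {V : Type*} [Fintype V] [DecidableEq V] (G : SimpleGraph V)
    [DecidableRel G.Adj] (f0 : Sym2 V → ℕ) (φ : V → V → ℤ)
    (hadj : ∀ u v, φ u v ≠ 0 → G.Adj u v)
    (hpos : ∀ u v, G.Adj u v → 0 ≤ (f0 s(u, v) : ℤ) + φ u v + φ v u) :
    ∃ f : Sym2 V → ℕ, (∀ u v, G.Adj u v → (f s(u, v) : ℤ) = f0 s(u, v) + φ u v + φ v u) ∧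
      ∀ v, (weightedDeg G f v : ℤ) = weightedDeg G f0 v + ∑ u, φ u v + ∑ u, φ v u := by
  classical
  let f : Sym2 V → ℕ := Sym2.lift ⟨fun u v => ((f0 s(u, v) : ℤ) + φ u v + φ v u).toNat, by
    intro u v
    simp only
    rw [Sym2.eq_swap]
    congr 1
    ring⟩
  have hf : ∀ u v, G.Adj u v → (f s(u, v) : ℤ) = f0 s(u, v) + φ u v + φ v u := by
    intro u v h
    simp only [f, Sym2.lift_mk]
    exact Int.toNat_of_nonneg (hpos u v h)
  refine ⟨f, hf, ?_⟩
  intro v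
  have hext : ∀ ψ : V → ℤ, (∀ u, ψ u ≠ 0 → G.Adj u v) →
      ∑ u ∈ G.neighborFinset v, ψ u = ∑ u, ψ u := by
    intro ψ hψ
    apply sum_subset (subset_univ _)
    intro u _ hu
    by_contra h
    apply hu
    rw [SimpleGraph.mem_neighborFinset]
    exact (hψ u h).symm
  unfold weightedDeg
  push_cast
  rw [← hext (fun u => φ u v) (fun u h => hadj u v h),
    ← hext (fun u => φ v u) (fun u h => (hadj v u h).symm), ← sum_add_distrib, ← sum_add_distrib]
  apply sum_congr rfl
  intro u hu
  rw [SimpleGraph.mem_neighborFinset] at hu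
  exact hf u v hu.symm

set_option maxHeartbeats 1000000 in
/-- Deterministic assembly. -/
lemma assemble {V : Type*} [Fintype V] [DecidableEq V] (G : SimpleGraph V)
    [DecidableRel G.Adj] (K M kmax : ℕ) (hK : 0 < K) (hM : 4 ≤ M)
    (A C D S : Finset V) (hcover : ∀ v, v ∈ A ∨ v ∈ C ∨ v ∈ D ∨ v ∈ S)
    (hAD : Disjoint A D) (hCD : Disjoint C D) (hAC : Disjoint A C) (hSD : Disjoint S D)
    (hSA : Disjoint S A) (hSC : Disjoint S C)
    (f0 : Sym2 V → ℕ) (hf0 : ∀ e ∈ G.edgeSet, 1 ≤ f0 e ∧ f0 e ≤ kmax)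
    (hfD : ∀ u v, G.Adj u v → v ∈ D → u ∈ A ∨ u ∈ C →
      1 + 2 * K ≤ f0 s(u, v) ∧ f0 s(u, v) + 3 * K ≤ kmax)
    (hS : Set.InjOn (weightedDeg G f0) S)
    (tA tC : V → ℕ) (htA : Set.InjOn tA A) (htC : Set.InjOn tC C)
    (hA : ∀ a ∈ A, (3 ≤ (tA a / K) % M ∧ ∀ s ∈ S, tA a ≠ weightedDeg G f0 s) ∧
      weightedDeg G f0 a ≤ tA a ∧
      tA a ≤ weightedDeg G f0 a + (D.filter fun d => G.Adj a d).card * K)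
    (hC : ∀ c ∈ C, ((tC c / K) % M = 0 ∧
      ∀ s ∈ S, tC c ≠ weightedDeg G f0 s ∧ tC c + K ≠ weightedDeg G f0 s) ∧
      weightedDeg G f0 c ≤ tC c ∧
      tC c ≤ weightedDeg G f0 c + (D.filter fun d => G.Adj c d).card * K)
    (h2 : ∀ c ∈ C, 2 ≤ (D.filter fun d => G.Adj c d).card)
    (hm : ∀ d ∈ D, ∀ j, K * j ≤ 2 * (D ∪ S).card + K →
      M * (j + 1) ≤ (C.filter fun c => G.Adj c d).card + 1) :
    ∃ f : Sym2 V → ℕ, IsIrregularAssignment G kmax f := by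
  classical
  have nAD : ∀ v, v ∈ A → v ∈ D → False := fun v h h' => Finset.disjoint_left.mp hAD h h'
  have nCD : ∀ v, v ∈ C → v ∈ D → False := fun v h h' => Finset.disjoint_left.mp hCD h h'
  have nAC : ∀ v, v ∈ A → v ∈ C → False := fun v h h' => Finset.disjoint_left.mp hAC h h'
  have nSD : ∀ v, v ∈ S → v ∈ D → False := fun v h h' => Finset.disjoint_left.mp hSD h h'
  have nSA : ∀ v, v ∈ S → v ∈ A → False := fun v h h' => Finset.disjoint_left.mp hSA h h'
  have nSC : ∀ v, v ∈ S → v ∈ C → False := fun v h h' => Finset.disjoint_left.mp hSC h h'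
  let t : V → ℕ := fun v => if v ∈ A then tA v else tC v
  let w : V → ℕ := weightedDeg G f0
  -- distribution
  have hdist : ∀ u, ∃ g : V → ℕ, (∀ v, g v ≤ K) ∧ (u ∈ A ∨ u ∈ C →
      ∑ v ∈ D.filter (fun d => G.Adj u d), g v = t u - w u) := by
    intro u
    by_cases hu : u ∈ A ∨ u ∈ C
    · obtain ⟨g, hg1, hg2⟩ := exists_distribution (D.filter fun d => G.Adj u d) K (t u - w u) (by
        rcases hu with hu | hu
        · have := (hA u hu).2.2
          simp only [t, hu, if_true, w]; omega
        · have := (hC u hu).2.2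
          have hu' : u ∉ A := fun h => nAC u h hu
          simp only [t, hu', if_false, w]; omega)
      exact ⟨g, hg1, fun _ => hg2⟩
    · exact ⟨fun _ => 0, by simp, fun h => absurd h hu⟩
  choose g1 hg1 hg1s using hdist
  let φ1 : V → V → ℤ := fun u d => if (u ∈ A ∨ u ∈ C) ∧ d ∈ D ∧ G.Adj u d then (g1 u d : ℤ) else 0
  have hφ1s : ∀ u, u ∈ A ∨ u ∈ C → ∑ d, φ1 u d = t u - w u := by
    intro u hu
    have hle : w u ≤ t u := by
      rcases hu with hu | hu
      · have := (hA u hu).2.1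
        simp only [t, hu, if_true, w]; omega
      · have := (hC u hu).2.1
        have hu' : u ∉ A := fun h => nAC u h hu
        simp only [t, hu', if_false, w]; omega
    simp only [φ1, hu, true_and]
    rw [← sum_filter, ← Nat.cast_sub hle, ← hg1s u hu]
    push_cast
    apply sum_congr
    · ext d; simp
    · intros; rfl
  obtain ⟨φ2, hφ2supp, hφ2abs, hφ2row, hφ2conf⟩ := exists_shift_edges C D S G.Adj K hK
    (fun d => (w d : ℤ) + ∑ u, φ1 u d) h2 (by
      intro d hd
      have := hm d hd 1 (by omega)
      have hpos : 0 < (C.filter fun c => G.Adj c d).card := by omega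
      obtain ⟨c, hc⟩ := card_pos.mp hpos
      exact ⟨c, (mem_filter.mp hc).1, (mem_filter.mp hc).2⟩)
  let g : V → ℤ := fun d => (w d : ℤ) + ∑ u, φ1 u d + ∑ u, φ2 u d
  obtain ⟨χ, hχsupp, hχabs, hχrow, hχblk, hχdist⟩ := exists_toggle C D S G.Adj K M hK (by omega) g
    (fun d hd => hm d hd _ (hφ2conf d hd))
  let φ : V → V → ℤ := fun u d => φ1 u d + φ2 u d + K * χ u d
  have hsupp : ∀ u d, φ u d ≠ 0 → (u ∈ A ∨ u ∈ C) ∧ d ∈ D ∧ G.Adj u d := by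
    intro u d h
    by_contra hcon
    apply h
    have e1 : φ1 u d = 0 := by simp only [φ1]; rw [if_neg hcon]
    have e2 : φ2 u d = 0 := by
      by_contra h'; obtain ⟨a, b, c⟩ := hφ2supp u d h'; exact hcon ⟨Or.inr a, b, c⟩
    have e3 : χ u d = 0 := by
      by_contra h'; obtain ⟨a, b, c⟩ := hχsupp u d h'; exact hcon ⟨Or.inr a, b, c⟩
    simp [φ, e1, e2, e3]
  have hφlo : ∀ u d, -(2 * K : ℤ) ≤ φ u d ∧ φ u d ≤ 3 * K := by
    intro u d
    have h1 : 0 ≤ φ1 u d ∧ φ1 u d ≤ K := by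
      simp only [φ1]; split_ifs
      · exact ⟨by positivity, by exact_mod_cast hg1 u d⟩
      · constructor <;> positivity
    have h2 := abs_le.mp (hφ2abs u d)
    have h3 := abs_le.mp (hχabs u d)
    have hKz : (0 : ℤ) < K := by exact_mod_cast hK
    simp only [φ]
    constructor <;> nlinarith
  have hzero : ∀ u v, v ∉ D → φ u v = 0 := by
    intro u v hv
    by_contra h
    exact hv (hsupp u v h).2.1
  have hzero' : ∀ u v, u ∈ D → φ u v = 0 := by
    intro u v hu
    by_contra h
    rcases (hsupp u v h).1 with h | h
    · exact nAD u h hu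
    · exact nCD u h hu
  have hedge : ∀ u v, G.Adj u v → 1 ≤ (f0 s(u, v) : ℤ) + φ u v + φ v u ∧
      (f0 s(u, v) : ℤ) + φ u v + φ v u ≤ kmax := by
    have main : ∀ u v, G.Adj u v → φ u v ≠ 0 → 1 ≤ (f0 s(u, v) : ℤ) + φ u v + φ v u ∧
      (f0 s(u, v) : ℤ) + φ u v + φ v u ≤ kmax := by
      intro u v huv h
      obtain ⟨h1, h2, -⟩ := hsupp u v h
      rw [hzero' v u h2]
      have := hfD u v huv h2 h1
      have hb := hφlo u v
      zify at this
      constructor <;> linarith [this.1, this.2, hb.1, hb.2]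
    intro u v huv
    by_cases h1 : φ u v = 0
    · by_cases h2 : φ v u = 0
      · rw [h1, h2]
        have := hf0 s(u, v) huv
        simpa using this
      · have := main v u huv.symm h2
        rw [Sym2.eq_swap]
        constructor <;> linarith [this.1, this.2]
    · exact main u v huv h1
  obtain ⟨f, hf1, hf2⟩ := weightedDeg_modify G f0 φ (fun u v h => (hsupp u v h).2.2)
    (fun u v h => by have := (hedge u v h).1; omega)
  refine ⟨f, ?_, ?_⟩
  · intro e
    induction e using Sym2.ind with
    | _ u v =>
    intro he
    have he' : G.Adj u v := he
    have := hedge u v he'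
    rw [← hf1 u v he'] at this
    rw [Finset.mem_Icc]
    exact_mod_cast this
  -- the weights
  have wA : ∀ v ∈ A, weightedDeg G f v = tA v := by
    intro v hv
    have hvD : v ∉ D := fun h => nAD v hv h
    have hvC : v ∉ C := fun h => nAC v hv h
    have e1 : ∑ u, φ u v = 0 := sum_eq_zero fun u _ => hzero u v hvD
    have e2 : ∑ u, φ v u = tA v - w v := by
      have : ∀ u, φ v u = φ1 v u := by
        intro u
        have e2 : φ2 v u = 0 := by
          by_contra h'; exact hvC (hφ2supp v u h').1
        have e3 : χ v u = 0 := by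
          by_contra h'; exact hvC (hχsupp v u h').1
        simp [φ, e2, e3]
      rw [sum_congr rfl fun u _ => this u, hφ1s v (Or.inl hv)]
      simp [t, hv]
    have := hf2 v
    rw [e1, e2] at this
    simp only [w] at this
    zify
    linarith
  have wC : ∀ v ∈ C, weightedDeg G f v = tC v ∨ weightedDeg G f v = tC v + K := by
    intro v hv
    have hvD : v ∉ D := fun h => nCD v hv h
    have hvA : v ∉ A := fun h => nAC v h hv
    have e1 : ∑ u, φ u v = 0 := sum_eq_zero fun u _ => hzero u v hvD
    have e2 : ∑ u, φ v u = tC v - w v + K * ∑ u ∈ D, χ v u := by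
      simp only [φ]
      rw [sum_add_distrib, sum_add_distrib, hφ2row, hφ1s v (Or.inr hv), ← mul_sum]
      have : ∑ u ∈ D, χ v u = ∑ u, χ v u := by
        apply sum_subset (subset_univ _)
        intro u _ hu
        by_contra h
        exact hu (hχsupp v u h).2.1
      rw [this]
      simp [t, hvA]
    have := hf2 v
    rw [e1, e2] at this
    simp only [w] at this
    rcases hχrow v with h | h
    · left; rw [h] at this; zify; linarith
    · right; rw [h] at this; zify; linarith
  have wD : ∀ v, v ∈ D ∪ S → (weightedDeg G f v : ℤ) = g v + K * ∑ c ∈ C, χ c v := by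
    intro v hv
    have e2 : ∑ u, φ v u = 0 := by
      apply sum_eq_zero
      intro u _
      by_contra h
      have := (hsupp v u h).1
      rw [mem_union] at hv
      rcases hv with hv | hv <;> rcases this with h | h
      · exact nAD v h hv
      · exact nCD v h hv
      · exact nSA v hv h
      · exact nSC v hv h
    have e1 : ∑ u, φ u v = ∑ u, φ1 u v + ∑ u, φ2 u v + K * ∑ c ∈ C, χ c v := by
      simp only [φ]
      rw [sum_add_distrib, sum_add_distrib, ← mul_sum]
      congr 2
      symm
      apply sum_subset (subset_univ _)
      intro u _ hu
      by_contra h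
      exact hu (hχsupp u v h).1
    rw [hf2 v, e1, e2]
    simp only [g, w]
    ring
  have wS : ∀ v ∈ S, weightedDeg G f v = weightedDeg G f0 v := by
    intro v hv
    have e2 : ∑ u, φ v u = 0 := by
      apply sum_eq_zero
      intro u _
      by_contra h
      rcases (hsupp v u h).1 with h | h
      · exact nSA v hv h
      · exact nSC v hv h
    have e1 : ∑ u, φ u v = 0 := sum_eq_zero fun u _ => hzero u v (fun h => nSD v hv h)
    have := hf2 v
    rw [e1, e2] at this
    zify; linarith
  -- blocks
  have bA : ∀ v ∈ A, 3 ≤ (weightedDeg G f v / K) % M := by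
    intro v hv; rw [wA v hv]; exact (hA v hv).1.1
  have bC1 : ∀ v ∈ C, ((tC v + K) / K) % M = 1 := by
    intro v hv
    rw [Nat.add_div_right _ hK, Nat.add_mod, (hC v hv).1.1, zero_add, Nat.mod_mod]
    exact Nat.mod_eq_of_lt (by omega)
  have bC : ∀ v ∈ C, (weightedDeg G f v / K) % M ≤ 1 := by
    intro v hv
    rcases wC v hv with h | h <;> rw [h]
    · rw [(hC v hv).1.1]; omega
    · rw [bC1 v hv]
  have bD : ∀ v ∈ D, (weightedDeg G f v / K) % M = 2 := by
    intro v hv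
    have := hχblk v hv
    rw [← wD v (mem_union_left _ hv)] at this
    exact_mod_cast this
  have main : ∀ u v, weightedDeg G f u = weightedDeg G f v →
      (u ∈ A ∧ v ∈ A) ∨ (u ∈ A ∧ v ∈ S) ∨ (u ∈ C ∧ v ∈ C) ∨ (u ∈ C ∧ v ∈ S) ∨ (u ∈ D ∧ v ∈ D) ∨
      (u ∈ D ∧ v ∈ S) ∨ (u ∈ S ∧ v ∈ S) → u = v := by
    rintro u v h (⟨hu, hv⟩ | ⟨hu, hv⟩ | ⟨hu, hv⟩ | ⟨hu, hv⟩ | ⟨hu, hv⟩ | ⟨hu, hv⟩ | ⟨hu, hv⟩)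
    · rw [wA u hu, wA v hv] at h; exact htA hu hv h
    · rw [wA u hu, wS v hv] at h; exact absurd h ((hA u hu).1.2 v hv)
    · have b1 := bC1 u hu
      have b2 := bC1 v hv
      have b3 := (hC u hu).1.1
      have b4 := (hC v hv).1.1
      rcases wC u hu with h1 | h1 <;> rcases wC v hv with h2 | h2 <;> rw [h1, h2] at h
      · exact htC hu hv h
      · rw [h] at b3; omega
      · rw [h] at b1; omega
      · exact htC hu hv (by omega)
    · rw [wS v hv] at h
      have := (hC u hu).1.2 v hv
      rcases wC u hu with h1 | h1 <;> rw [h1] at h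
      · exact absurd h this.1
      · exact absurd h this.2
    · by_contra hne
      have := hχdist v hv u (mem_union_left _ hu) hne
      rw [← wD u (mem_union_left _ hu), ← wD v (mem_union_left _ hv)] at this
      exact this (by exact_mod_cast h)
    · by_contra hne
      have := hχdist u hu v (mem_union_right _ hv) (fun h => hne h.symm)
      rw [← wD u (mem_union_left _ hu), ← wD v (mem_union_right _ hv)] at this
      exact this (by exact_mod_cast h.symm)
    · rw [wS u hu, wS v hv] at h; exact hS hu hv h
  intro u v h
  have bu := hcover u
  have bv := hcover v
  rcases id bu with hu | hu | hu | hu <;> rcases id bv with hv | hv | hv | hv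
  · exact main u v h (Or.inl ⟨hu, hv⟩)
  · have h1 := bA u hu; have h2 := bC v hv; rw [h] at h1; omega
  · have h1 := bA u hu; have h2 := bD v hv; rw [h] at h1; omega
  · exact main u v h (Or.inr (Or.inl ⟨hu, hv⟩))
  · have h1 := bC u hu; have h2 := bA v hv; rw [h] at h1; omega
  · exact main u v h (Or.inr (Or.inr (Or.inl ⟨hu, hv⟩)))
  · have h1 := bC u hu; have h2 := bD v hv; rw [h] at h1; omega
  · exact main u v h (Or.inr (Or.inr (Or.inr (Or.inl ⟨hu, hv⟩))))
  · have h1 := bD u hu; have h2 := bA v hv; rw [h] at h1; omega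
  · have h1 := bD u hu; have h2 := bC v hv; rw [h] at h1; omega
  · exact main u v h (Or.inr (Or.inr (Or.inr (Or.inr (Or.inl ⟨hu, hv⟩)))))
  · exact main u v h (Or.inr (Or.inr (Or.inr (Or.inr (Or.inr (Or.inl ⟨hu, hv⟩))))))
  · exact (main v u h.symm (Or.inr (Or.inl ⟨hv, hu⟩))).symm
  · exact (main v u h.symm (Or.inr (Or.inr (Or.inr (Or.inl ⟨hv, hu⟩))))).symm
  · exact (main v u h.symm (Or.inr (Or.inr (Or.inr (Or.inr (Or.inr (Or.inl ⟨hv, hu⟩))))))).symm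
  · exact main u v h (Or.inr (Or.inr (Or.inr (Or.inr (Or.inr (Or.inr ⟨hu, hv⟩))))))

lemma sum_card_adj_le {V : Type*} [Fintype V] [DecidableEq V] (G : SimpleGraph V)
    [DecidableRel G.Adj] (X Y : Finset V) :
    ∑ v ∈ X, ((Y.filter fun y => G.Adj v y).card : ℝ) ≤ ∑ y ∈ Y, (G.degree y : ℝ) := by
  have h1 : ∑ v ∈ X, (Y.filter fun y => G.Adj v y).card =
      ∑ y ∈ Y, (X.filter fun v => G.Adj v y).card := by
    simp only [card_filter]
    rw [sum_comm]
  have h2 : ∑ y ∈ Y, (X.filter fun v => G.Adj v y).card ≤ ∑ y ∈ Y, G.degree y := by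
    apply sum_le_sum
    intro y _
    rw [← G.card_neighborFinset_eq_degree]
    apply card_le_card
    intro v hv
    rw [SimpleGraph.mem_neighborFinset]
    exact (mem_filter.mp hv).2.symm
  exact_mod_cast h1 ▸ h2

lemma core_sets {V : Type*} [Fintype V] [DecidableEq V] (G : SimpleGraph V)
    [DecidableRel G.Adj] (A C D Bad : Finset V) (hAC : Disjoint A C) (hAD : Disjoint A D)
    (hCD : Disjoint C D) (hcov : ∀ v, v ∈ A ∨ v ∈ C ∨ v ∈ D)
    (q p δ : ℝ) (hq : 0 < q) (hqp : q ≤ p) (hp1 : p ≤ 1) (hδ : 0 < δ)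
    (hdeg : ∀ v, δ ≤ G.degree v)
    (hD : ∀ v, v ∉ Bad → q * G.degree v / 2 ≤ ((D.filter fun d => G.Adj v d).card : ℝ))
    (hC : ∀ v, v ∉ Bad → p * G.degree v / 2 ≤ ((C.filter fun d => G.Adj v d).card : ℝ)) :
    ∃ A' C' D' S : Finset V, A' ⊆ A ∧ C' ⊆ C ∧ D' ⊆ D ∧
      (∀ v, v ∈ A' ∨ v ∈ C' ∨ v ∈ D' ∨ v ∈ S) ∧
      Disjoint S D' ∧ Disjoint S A' ∧ Disjoint S C' ∧
      (S.card : ℝ) * (q ^ 2 * δ) ≤ 40 * ∑ v ∈ Bad, (G.degree v : ℝ) ∧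
      (∀ v ∈ A', v ∉ Bad ∧ q * G.degree v / 8 ≤ ((D'.filter fun d => G.Adj v d).card : ℝ)) ∧
      (∀ v ∈ C', v ∉ Bad ∧ q * G.degree v / 8 ≤ ((D'.filter fun d => G.Adj v d).card : ℝ)) ∧
      (∀ v ∈ D', p * G.degree v / 8 ≤ ((C'.filter fun d => G.Adj d v).card : ℝ)) := by
  classical
  obtain ⟨C', D', hC', hD', hc, hd, hrem⟩ := exists_core (C \ Bad) (D \ Bad) G.Adj
    (fun v => q * G.degree v / 2) (fun v => p * G.degree v / 2)
  set A' := A.filter fun v => v ∉ Bad ∧ q * G.degree v / 8 ≤ ((D'.filter fun d => G.Adj v d).card : ℝ)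
    with hA'
  set RC := (C \ Bad) \ C' with hRC
  set RD := (D \ Bad) \ D' with hRD
  set S2 := (A \ Bad) \ A' with hS2
  set vol := ∑ v ∈ Bad, (G.degree v : ℝ) with hvol
  have hvol0 : 0 ≤ vol := sum_nonneg fun v _ => by positivity
  have hq1 : q ≤ 1 := hqp.trans hp1
  -- splitting neighbourhoods
  have hsplit : ∀ (X Y : Finset V) (v : V), ((X.filter fun d => G.Adj v d).card : ℝ) ≤
      (((X \ Y).filter fun d => G.Adj v d).card : ℝ) + ((Y.filter fun d => G.Adj v d).card : ℝ) := by
    intro X Y v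
    have : (X.filter fun d => G.Adj v d) ⊆
        ((X \ Y).filter fun d => G.Adj v d) ∪ (Y.filter fun d => G.Adj v d) := by
      intro u hu
      simp only [mem_filter, mem_union, mem_sdiff] at hu ⊢
      tauto
    exact_mod_cast (card_le_card this).trans (card_union_le _ _)
  -- removed vertices
  have hH : ∑ c ∈ RC, q * G.degree c / 2 + ∑ d ∈ RD, p * G.degree d / 2 ≤ 4 * vol := by
    have h1 : ∑ c ∈ RC, q * G.degree c / 2 ≤ ∑ c ∈ RC, (((D \ Bad).filter fun d => G.Adj c d).card : ℝ)
        + ∑ c ∈ RC, ((Bad.filter fun d => G.Adj c d).card : ℝ) := by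
      rw [← sum_add_distrib]
      apply sum_le_sum
      intro c hcR
      have : c ∉ Bad := by
        rw [hRC, mem_sdiff, mem_sdiff] at hcR; exact hcR.1.2
      exact (hD c this).trans (hsplit D Bad c)
    have h2 : ∑ c ∈ RD, p * G.degree c / 2 ≤ ∑ c ∈ RD, (((C \ Bad).filter fun d => G.Adj d c).card : ℝ)
        + ∑ c ∈ RD, ((Bad.filter fun d => G.Adj c d).card : ℝ) := by
      rw [← sum_add_distrib]
      apply sum_le_sum
      intro c hcR
      have : c ∉ Bad := by
        rw [hRD, mem_sdiff, mem_sdiff] at hcR; exact hcR.1.2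
      have h3 := (hC c this).trans (hsplit C Bad c)
      have h4 : ((C \ Bad).filter fun d => G.Adj d c) = ((C \ Bad).filter fun d => G.Adj c d) :=
        filter_congr fun d _ => G.adj_comm d c
      rw [h4]; exact h3
    have h3 := sum_card_adj_le G RC Bad
    have h4 := sum_card_adj_le G RD Bad
    linarith
  have hRCR : (RC.card : ℝ) * (q * δ / 2) ≤ ∑ c ∈ RC, q * G.degree c / 2 := by
    rw [← nsmul_eq_mul]
    apply card_nsmul_le_sum
    intro v _
    have := hdeg v
    have := mul_le_mul_of_nonneg_left this hq.le
    linarith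
  have hRDR : (RD.card : ℝ) * (q * δ / 2) ≤ ∑ c ∈ RD, p * G.degree c / 2 := by
    rw [← nsmul_eq_mul]
    apply card_nsmul_le_sum
    intro v _
    have := mul_le_mul hqp (hdeg v) hδ.le (hq.le.trans hqp)
    linarith
  have hBadc : (Bad.card : ℝ) * δ ≤ vol := by
    rw [← nsmul_eq_mul]
    exact card_nsmul_le_sum _ _ _ fun v _ => hdeg v
  have hRC0 : 0 ≤ ∑ c ∈ RC, q * (G.degree c : ℝ) / 2 := sum_nonneg fun v _ => by positivity
  have hvolRD : q * ∑ d ∈ RD, (G.degree d : ℝ) ≤ 8 * vol := by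
    have : q * ∑ d ∈ RD, (G.degree d : ℝ) ≤ 2 * ∑ d ∈ RD, p * (G.degree d : ℝ) / 2 := by
      rw [mul_sum, mul_sum]
      apply sum_le_sum
      intro d _
      have := mul_le_mul_of_nonneg_right hqp (Nat.cast_nonneg (α := ℝ) (G.degree d))
      linarith
    linarith
  have hS2c : (S2.card : ℝ) * (3 / 8 * q * δ) ≤ vol + ∑ d ∈ RD, (G.degree d : ℝ) := by
    have h1 := sum_card_adj_le G S2 (Bad ∪ RD)
    have h2 : ∑ y ∈ Bad ∪ RD, (G.degree y : ℝ) = vol + ∑ d ∈ RD, (G.degree d : ℝ) := by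
      rw [sum_union]
      rw [Finset.disjoint_left]
      intro v hv hv'
      rw [hRD, mem_sdiff, mem_sdiff] at hv'
      exact hv'.1.2 hv
    rw [← h2]
    refine le_trans ?_ h1
    rw [← nsmul_eq_mul]
    apply card_nsmul_le_sum
    intro v hv
    rw [hS2, mem_sdiff, mem_sdiff, hA', mem_filter] at hv
    obtain ⟨⟨hvA, hvB⟩, hv3⟩ := hv
    have h4 : ((D'.filter fun d => G.Adj v d).card : ℝ) < q * G.degree v / 8 := by
      by_contra h; push Not at h; exact hv3 ⟨hvA, hvB, h⟩
    have h5 := hsplit D D' v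
    have h6 := hD v hvB
    have h7 : (((D \ D').filter fun d => G.Adj v d).card : ℝ) ≤
        (((Bad ∪ RD).filter fun d => G.Adj v d).card : ℝ) := by
      have : ((D \ D').filter fun d => G.Adj v d) ⊆ ((Bad ∪ RD).filter fun d => G.Adj v d) := by
        apply filter_subset_filter
        intro u hu
        rw [mem_sdiff] at hu
        rw [mem_union, hRD, mem_sdiff, mem_sdiff]
        tauto
      exact_mod_cast card_le_card this
    have h8 := mul_le_mul_of_nonneg_left (hdeg v) hq.le
    linarith
  refine ⟨A', C', D', Bad ∪ RC ∪ RD ∪ S2, filter_subset _ _, hC'.trans sdiff_subset,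
    hD'.trans sdiff_subset, ?_, ?_, ?_, ?_, ?_, ?_, ?_, ?_⟩
  · intro v
    simp only [mem_union, hRC, hRD, hS2, mem_sdiff]
    rcases hcov v with h | h | h <;> tauto
  · rw [Finset.disjoint_left]
    intro v hv hv'
    have h1 := mem_sdiff.mp (hD' hv')
    simp only [mem_union, hRC, hRD, hS2, mem_sdiff] at hv
    have h2 : v ∈ A → v ∉ D := fun h => Finset.disjoint_left.mp hAD h
    have h3 : v ∈ C → v ∉ D := fun h => Finset.disjoint_left.mp hCD h
    tauto
  · rw [Finset.disjoint_left]
    intro v hv hv'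
    have h1 := mem_filter.mp hv'
    simp only [mem_union, hRC, hRD, hS2, mem_sdiff] at hv
    have h2 : v ∈ A → v ∉ D := fun h => Finset.disjoint_left.mp hAD h
    have h3 : v ∈ A → v ∉ C := fun h => Finset.disjoint_left.mp hAC h
    tauto
  · rw [Finset.disjoint_left]
    intro v hv hv'
    have h1 := mem_sdiff.mp (hC' hv')
    simp only [mem_union, hRC, hRD, hS2, mem_sdiff] at hv
    have h2 : v ∈ A → v ∉ C := fun h => Finset.disjoint_left.mp hAC h
    have h3 : v ∈ C → v ∉ D := fun h => Finset.disjoint_left.mp hCD h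
    tauto
  · have hcard : ((Bad ∪ RC ∪ RD ∪ S2).card : ℝ) ≤ Bad.card + RC.card + RD.card + S2.card := by
      have := card_union_le (Bad ∪ RC ∪ RD) S2
      have := card_union_le (Bad ∪ RC) RD
      have := card_union_le Bad RC
      exact_mod_cast (by omega : (Bad ∪ RC ∪ RD ∪ S2).card ≤ Bad.card + RC.card + RD.card + S2.card)
    have h0 : 0 < q ^ 2 * δ := by positivity
    refine (mul_le_mul_of_nonneg_right hcard h0.le).trans ?_
    have b1 : (Bad.card : ℝ) * (q ^ 2 * δ) ≤ vol := by
      have : q ^ 2 ≤ 1 := by nlinarith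
      calc (Bad.card : ℝ) * (q ^ 2 * δ) = q ^ 2 * (Bad.card * δ) := by ring
        _ ≤ 1 * (Bad.card * δ) := by gcongr
        _ ≤ vol := by linarith
    have b2 : ((RC.card : ℝ) + RD.card) * (q ^ 2 * δ) ≤ 8 * vol := by
      have : ((RC.card : ℝ) + RD.card) * (q * δ) ≤ 8 * vol := by linarith
      calc ((RC.card : ℝ) + RD.card) * (q ^ 2 * δ) = q * (((RC.card : ℝ) + RD.card) * (q * δ)) := by ring
        _ ≤ 1 * (((RC.card : ℝ) + RD.card) * (q * δ)) := by gcongr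
        _ ≤ 8 * vol := by linarith
    have b3 : (S2.card : ℝ) * (q ^ 2 * δ) * 3 ≤ 8 * (q * vol) + 64 * vol := by
      have := mul_le_mul_of_nonneg_left hS2c hq.le
      nlinarith
    have b4 : q * vol ≤ vol := by nlinarith

    nlinarith
  · intro v hv; exact (mem_filter.mp hv).2
  · intro v hv
    refine ⟨(mem_sdiff.mp (hC' hv)).2, ?_⟩
    have := hc v hv
    linarith
  · intro v hv
    have := hd v hv
    linarith

lemma exists_base {V : Type*} [Fintype V] [DecidableEq V] (G : SimpleGraph V)
    [DecidableRel G.Adj] (D : Finset V) (x : V → ℕ) (N h K : ℕ) :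
    ∃ z : Sym2 V → ℕ, (∀ e, 1 ≤ z e ∧ z e ≤ 1 + h + 2 * K) ∧
      (∀ e, z e ≤ 1 + max h (2 * K)) ∧
      (∀ u v, v ∈ D → z s(u, v) = 1 + 2 * K) ∧
      (∀ v, v ∉ D → weightedDeg G z v = G.degree v +
        h * ((univ.filter fun u => u ∉ D ∧ N ≤ x u + x v).filter fun u => G.Adj v u).card +
        2 * K * (D.filter fun u => G.Adj v u).card) := by
  classical
  let z : Sym2 V → ℕ := Sym2.lift ⟨fun u v => if u ∉ D ∧ v ∉ D then
      1 + (if N ≤ x u + x v then h else 0) else 1 + 2 * K, by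
    intro u v
    simp only [and_comm, add_comm]⟩
  have hz : ∀ u v, z s(u, v) = if u ∉ D ∧ v ∉ D then
      1 + (if N ≤ x u + x v then h else 0) else 1 + 2 * K := fun u v => rfl
  refine ⟨z, ?_, ?_, ?_, ?_⟩
  · intro e
    induction e using Sym2.ind with
    | _ u v =>
    rw [hz]
    split_ifs <;> omega
  · intro e
    induction e using Sym2.ind with
    | _ u v =>
    rw [hz]
    have := le_max_left h (2 * K)
    have := le_max_right h (2 * K)
    split_ifs <;> omega
  · intro u v hv
    rw [hz, if_neg]
    tauto
  · intro v hv
    unfold weightedDeg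
    have h1 : ∀ u, z s(u, v) = 1 + h * (if u ∉ D ∧ N ≤ x u + x v then 1 else 0)
        + 2 * K * (if u ∈ D then 1 else 0) := by
      intro u
      rw [hz]
      by_cases hu : u ∈ D
      · simp [hu]
      · by_cases hx : N ≤ x u + x v <;> simp [hu, hv, hx]
    rw [sum_congr rfl fun u _ => h1 u, sum_add_distrib, sum_add_distrib, ← mul_sum, ← mul_sum,
      ← card_filter, ← card_filter, ← card_eq_sum_ones, G.card_neighborFinset_eq_degree]
    have e1 : (G.neighborFinset v).filter (fun u => u ∉ D ∧ N ≤ x u + x v) =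
        (univ.filter fun u => u ∉ D ∧ N ≤ x u + x v).filter fun u => G.Adj v u := by
      ext u; simp; tauto
    have e2 : (G.neighborFinset v).filter (fun u => u ∈ D) = D.filter fun u => G.Adj v u := by
      ext u; simp; tauto
    rw [e1, e2]

lemma weightedDeg_add {V : Type*} [Fintype V] (G : SimpleGraph V)
    [DecidableRel G.Adj] (f g : Sym2 V → ℕ) (v : V) :
    weightedDeg G (fun e => f e + g e) v = weightedDeg G f v + weightedDeg G g v := by
  unfold weightedDeg; rw [sum_add_distrib]

lemma weightedDeg_le {V : Type*} [Fintype V] (G : SimpleGraph V)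
    [DecidableRel G.Adj] (f : Sym2 V → ℕ) (B : ℕ) (hB : ∀ e, f e ≤ B) (v : V) :
    weightedDeg G f v ≤ G.degree v * B := by
  unfold weightedDeg
  rw [← G.card_neighborFinset_eq_degree, ← smul_eq_mul]
  exact sum_le_card_nsmul _ _ _ fun u _ => hB _

/-- Placement of the vertices in `W` in allowed blocks avoiding a small set. -/
lemma place_in_blocks {V : Type*} [DecidableEq V] (W : Finset V) (w : V → ℕ) (K M E : ℕ)
    (hK : 0 < K) (R : Finset ℕ) (hR : R ⊆ Finset.range M) (X : Finset ℕ) (α β : ℝ)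
    (hM : 0 < M)
    (hα : α * M ≤ R.card)
    (hβ : β + R.card * K + X.card ≤ R.card * E / M)
    (hwin : ∀ x y, x ≤ y → (∃ v ∈ W, w v = x) → (∃ v ∈ W, w v = y) →
      ((W.filter fun v => x ≤ w v ∧ w v ≤ y).card : ℝ) ≤ α * ((y : ℝ) - x) + β) :
    ∃ t : V → ℕ, Set.InjOn t W ∧ ∀ v ∈ W, ((t v / K) % M ∈ R ∧ t v ∉ X) ∧
      w v ≤ t v ∧ t v ≤ w v + E := by
  classical
  apply exists_placement W w E (fun t => (t / K) % M ∈ R ∧ t ∉ X)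
  intro x y hxy hx hy
  have h1 := hwin x y hxy hx hy
  have h2 := card_blocks K M hK R hR x (y + E) (by omega)
  have h3 : ((Finset.Icc x (y + E)).filter fun t => (t / K) % M ∈ R).card ≤
      ((Finset.Icc x (y + E)).filter fun t => (t / K) % M ∈ R ∧ t ∉ X).card + X.card := by
    rw [← Nat.sub_le_iff_le_add]
    refine (le_card_sdiff _ _).trans (card_le_card ?_)
    intro t ht
    simp only [mem_sdiff, mem_filter] at ht ⊢
    tauto
  set a := ((Finset.Icc x (y + E)).filter fun t => (t / K) % M ∈ R ∧ t ∉ X).card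
  set b := ((Finset.Icc x (y + E)).filter fun t => (t / K) % M ∈ R).card
  have hMr : (0 : ℝ) < M := by exact_mod_cast hM
  have h2' : (R.card : ℝ) * (y + E - x) ≤ M * (b + R.card * K) := by
    have : ((y + E - x : ℕ) : ℝ) = (y : ℝ) + E - x := by
      rw [Nat.cast_sub (by omega)]; push_cast; ring
    rw [← this]; exact_mod_cast h2
  have h3' : (b : ℝ) ≤ a + X.card := by exact_mod_cast h3
  have hxy' : (0 : ℝ) ≤ (y : ℝ) - x := by
    have : (x : ℝ) ≤ y := by exact_mod_cast hxy
    linarith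
  have h4 : (R.card : ℝ) / M * (y - x) + R.card * E / M ≤ b + R.card * K := by
    have : (R.card : ℝ) * (y + E - x) / M ≤ b + R.card * K := by
      rw [div_le_iff₀ hMr]; linarith
    calc _ = (R.card : ℝ) * (y + E - x) / M := by ring
      _ ≤ _ := this
  have h5 : α * ((y : ℝ) - x) ≤ (R.card : ℝ) / M * (y - x) := by
    apply mul_le_mul_of_nonneg_right _ hxy'
    rw [le_div_iff₀ hMr]; exact hα
  have : ((W.filter fun v => x ≤ w v ∧ w v ≤ y).card : ℝ) ≤ a := by linarith
  exact_mod_cast this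

set_option maxHeartbeats 2000000 in
lemma det_main {V : Type*} [Fintype V] [DecidableEq V] (G : SimpleGraph V)
    [DecidableRel G.Adj] (n δ M h N K : ℕ) (hn : Fintype.card V = n) (hM : 10 ≤ M)
    (hne : Nonempty V)
    (hdeg : ∀ v, δ ≤ G.degree v) (hδM : 2 ^ 30 * M ^ 4 ≤ δ)
    (hKdef : K = n / (8 * δ) + 1)
    (hh1 : (n : ℝ) / δ * (1 + 10 / M) ≤ h) (hh2 : (h : ℝ) ≤ n / δ * (1 + 10 / M) + 1)
    (q p τ : ℝ) (hq : q = 1 / (2 ^ 12 * M ^ 2)) (hp : p = 1 / (4 * M))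
    (hτ : τ = 1 / (2 ^ 27 * M ^ 2))
    (A C D Bad : Finset V) (hAC : Disjoint A C) (hAD : Disjoint A D)
    (hCD : Disjoint C D) (hcov : ∀ v, v ∈ A ∨ v ∈ C ∨ v ∈ D)
    (x : V → ℕ) (hx : ∀ v, x v < N)
    (hB1 : ∀ v, v ∉ Bad → |((D.filter fun u => G.Adj v u).card : ℝ) - q * G.degree v| ≤ τ * G.degree v)
    (hB2 : ∀ v, v ∉ Bad → |((C.filter fun u => G.Adj v u).card : ℝ) - p * G.degree v| ≤ τ * G.degree v)
    (hB3 : ∀ v, v ∉ Bad → ∀ a < N,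
      |(((univ.filter fun u => u ∉ D ∧ N ≤ x u + a).filter fun u => G.Adj v u).card : ℝ)
        - (1 - q) * (a / N) * G.degree v| ≤ τ * G.degree v)
    (hvol : ∑ v ∈ Bad, (G.degree v : ℝ) ≤ q ^ 2 * τ * n / 80)
    (hDc : (D.card : ℝ) ≤ 4 * q * n)
    (μ : V → ℝ) (hμ : ∀ v, μ v = G.degree v * (1 + h * ((1 - q) * (x v / N)) + 2 * K * q))
    (hwA : ∀ y1 y2 : ℕ, y1 ≤ y2 → y2 ≤ 5 * n ^ 2 →
      ((A.filter fun v => (y1 : ℝ) - 5 * τ * h * G.degree v ≤ μ v ∧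
        μ v ≤ y2 + 5 * τ * h * G.degree v).card : ℝ) ≤ (1 - 4 / M) * ((y2 : ℝ) - y1) + 22 * τ * n)
    (hwC : ∀ y1 y2 : ℕ, y1 ≤ y2 → y2 ≤ 5 * n ^ 2 →
      ((C.filter fun v => (y1 : ℝ) - 5 * τ * h * G.degree v ≤ μ v ∧
        μ v ≤ y2 + 5 * τ * h * G.degree v).card : ℝ) ≤
          p * ((1 - 4 / M) * ((y2 : ℝ) - y1) + 22 * τ * n)) :
    ∃ (k : ℕ) (f : Sym2 V → ℕ), IsIrregularAssignment G k f ∧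
      (k : ℝ) ≤ n / δ * (1 + 11 / M) + 8 := by
  classical
  obtain ⟨v0⟩ := hne
  have hδn : δ < n := by
    rw [← hn]; exact (hdeg v0).trans_lt (G.degree_lt_card_verts v0)
  have hM10 : (10 : ℝ) ≤ M := by exact_mod_cast hM
  have hMp : (0 : ℝ) < M := by linarith
  have hδMr : (2 : ℝ) ^ 30 * M ^ 4 ≤ δ := by exact_mod_cast hδM
  have hδp : (0 : ℝ) < δ := lt_of_lt_of_le (by positivity) hδMr
  have hδnr : (δ : ℝ) ≤ n := by exact_mod_cast hδn.le
  have hnp : (0 : ℝ) < n := hδp.trans_le hδnr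
  have hqp0 : 0 < q := by rw [hq]; positivity
  have hτp : 0 < τ := by rw [hτ]; positivity
  have hpp : 0 < p := by rw [hp]; positivity
  have hτq : τ = q / 2 ^ 15 := by rw [hq, hτ]; field_simp; try norm_num
  have hqp : q ≤ p / 2 := by
    rw [hq, hp, div_div, div_le_div_iff₀ (by positivity) (by positivity)]; nlinarith
  have hp1 : p ≤ 1 := by
    rw [hp, div_le_one (by positivity)]; linarith
  have hKp : 0 < K := by rw [hKdef]; exact Nat.succ_pos _
  -- K real bounds
  have hK1 : (n : ℝ) / (8 * δ) ≤ K := by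
    have : (n : ℝ) / ((8 * δ : ℕ) : ℝ) < (n / (8 * δ) : ℕ) + 1 := by
      have h8 : 0 < 8 * δ := by
        have : 0 < δ := by exact_mod_cast hδp
        omega
      rw [div_lt_iff₀ (by exact_mod_cast h8)]
      have := Nat.lt_div_mul_add (a := n) h8
      have h' : n < (n / (8 * δ) + 1) * (8 * δ) := by rw [add_mul, one_mul]; exact this
      exact_mod_cast h'
    rw [hKdef]; push_cast at this ⊢; exact this.le
  have hK2 : (K : ℝ) ≤ n / (8 * δ) + 1 := by
    have : ((n / (8 * δ) : ℕ) : ℝ) ≤ (n : ℝ) / ((8 * δ : ℕ) : ℝ) := Nat.cast_div_le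
    rw [hKdef]; push_cast at this ⊢; linarith
  have hnδ1 : (1 : ℝ) ≤ n / δ := by rw [le_div_iff₀ hδp]; linarith
  have hhn : (n : ℝ) / δ ≤ h := by
    refine le_trans ?_ hh1
    have : (0 : ℝ) ≤ 10 / M := by positivity
    nlinarith
  have hh3 : (1 : ℝ) ≤ h := hnδ1.trans hhn
  have hn8 : (n : ℝ) / (8 * δ) = n / δ / 8 := by rw [div_div, mul_comm]
  have h2K : 2 * (K : ℝ) ≤ 3 * h := by rw [hn8] at hK2; linarith
  -- the unit
  set U : ℝ := n / (2 ^ 30 * M ^ 2) with hU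
  have hnU : (n : ℝ) = 2 ^ 30 * M ^ 2 * U := by rw [hU]; field_simp
  have hM2 : (100 : ℝ) ≤ (M : ℝ) ^ 2 := by nlinarith
  have hUM : (M : ℝ) ^ 2 ≤ U := by
    rw [hU, le_div_iff₀ (by positivity)]
    refine le_trans (le_of_eq ?_) (hδMr.trans hδnr); ring
  have hU1 : 1 ≤ U := by linarith
  have hτn : τ * n = 8 * U := by rw [hτ, hnU]; field_simp; try norm_num
  have hqn : q * n = 2 ^ 18 * U := by rw [hq, hnU]; field_simp; try norm_num
  -- core
  obtain ⟨A', C', D', S, hA', hC', hD', hcov', hSD, hSA, hSC, hScard, hdA, hdC, hdD⟩ :=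
    core_sets G A C D Bad hAC hAD hCD hcov q p δ hqp0 (by linarith) hp1 hδp
      (fun v => by exact_mod_cast hdeg v)
      (fun v hv => by
        have := (abs_le.mp (hB1 v hv)).1
        have h0 : (0 : ℝ) ≤ G.degree v := by positivity
        rw [hτq] at this
        nlinarith [mul_nonneg hqp0.le h0])
      (fun v hv => by
        have := (abs_le.mp (hB2 v hv)).1
        have h0 : (0 : ℝ) ≤ G.degree v := by positivity
        have h1 : τ ≤ p / 2 := by rw [hτq]; linarith
        nlinarith [mul_le_mul_of_nonneg_right h1 h0])
  have hS1 : (S.card : ℝ) * δ ≤ τ * n / 2 := by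
    have h1 : q ^ 2 * ((S.card : ℝ) * δ) ≤ q ^ 2 * (τ * n / 2) := by linarith
    exact le_of_mul_le_mul_left h1 (by positivity)
  have hS2 : (S.card : ℝ) ≤ τ * (n / δ) / 2 := by
    rw [show τ * ((n : ℝ) / δ) / 2 = (τ * n / 2) / δ by ring, le_div_iff₀ hδp]; exact hS1
  have hS3 : 2 * (S.card : ℝ) ≤ τ * h := by
    have := mul_le_mul_of_nonneg_left hhn hτp.le
    linarith
  have hSM : (M : ℝ) * S.card ≤ U := by
    have h1 : (S.card : ℝ) * δ ≤ 4 * U := by rw [hτn] at hS1; linarith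
    have h2 : 4 * (M : ℝ) ≤ δ := by
      refine le_trans ?_ hδMr
      have : (M : ℝ) ≤ M ^ 4 := le_self_pow₀ (by linarith) (by norm_num)
      nlinarith
    have h3 : (S.card : ℝ) * (4 * M) ≤ 4 * U :=
      le_trans (mul_le_mul_of_nonneg_left h2 (Nat.cast_nonneg _)) h1
    linarith
  have hKM : (M : ℝ) * K ≤ U := by
    have h1 : (n : ℝ) / δ ≤ U / M ^ 2 := by
      rw [hU, div_div]
      apply div_le_div_of_nonneg_left hnp.le (by positivity)
      refine le_trans (le_of_eq ?_) hδMr; ring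
    have h2 : (M : ℝ) * K ≤ M * (U / M ^ 2) / 8 + M := by
      have := mul_le_mul_of_nonneg_left hK2 hMp.le
      rw [hn8] at this
      have h3 := mul_le_mul_of_nonneg_left h1 hMp.le
      linarith
    have h3 : (M : ℝ) * (U / M ^ 2) = U / M := by field_simp
    have h4 : U / M ≤ U := div_le_self (by linarith) (by linarith)
    rw [h3] at h2
    nlinarith
  -- base weights and the perturbation
  obtain ⟨z, hz1, hz2, hz3, hz4⟩ := exists_base G D x N h K
  have hdeg3 : ∀ v, 3 ≤ G.degree v := by
    intro v
    refine le_trans ?_ (hdeg v)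
    refine le_trans ?_ hδM
    have : 1 ≤ M ^ 4 := Nat.one_le_pow _ _ (by omega)
    omega
  obtain ⟨r, hr1, hr2, hr3⟩ := exists_perturb G S z (by
    intro u _ v _ huv
    have : ∃ w ∈ G.neighborFinset u, w ≠ v := by
      apply exists_mem_ne
      rw [G.card_neighborFinset_eq_degree]
      have := hdeg3 u; omega
    obtain ⟨w, hw, hwv⟩ := this
    rw [SimpleGraph.mem_neighborFinset] at hw
    refine ⟨s(u, w), hw, Or.inl ⟨Sym2.mem_mk_left _ _, ?_⟩⟩
    rw [Sym2.mem_iff]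
    rintro (h | h)
    · exact huv h.symm
    · exact hwv h.symm)
  set f0 : Sym2 V → ℕ := fun e => z e + r e with hf0
  set w : V → ℕ := weightedDeg G f0 with hw
  -- weights near their means
  have hclose : ∀ v, v ∉ D → v ∉ Bad → |(w v : ℝ) - μ v| ≤ 5 * τ * h * G.degree v := by
    intro v hvD hvB
    have e1 : w v = weightedDeg G z v + weightedDeg G r v := weightedDeg_add G z r v
    have e2 : weightedDeg G r v ≤ G.degree v * (2 * S.card) := weightedDeg_le G r _ hr1 v
    have e2' : (weightedDeg G r v : ℝ) ≤ G.degree v * (2 * S.card) := by exact_mod_cast e2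
    have e2'' : (0 : ℝ) ≤ weightedDeg G r v := by positivity
    rw [hz4 v hvD] at e1
    have e1' := congrArg (Nat.cast (R := ℝ)) e1
    push_cast at e1'
    have b1 := abs_le.mp (hB1 v hvB)
    have b3 := abs_le.mp (hB3 v hvB (x v) (hx v))
    set d : ℝ := (G.degree v : ℝ) with hd
    have hd0 : 0 ≤ d := by positivity
    set c1 : ℝ :=
      (((univ.filter fun u => u ∉ D ∧ N ≤ x u + x v).filter fun u => G.Adj v u).card : ℝ)
    set c2 : ℝ := ((D.filter fun u => G.Adj v u).card : ℝ)
    have hh0 : (0 : ℝ) ≤ h := by positivity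
    have hK0 : (0 : ℝ) ≤ 2 * K := by positivity
    have m1 := mul_le_mul_of_nonneg_left b3.1 hh0
    have m2 := mul_le_mul_of_nonneg_left b3.2 hh0
    have m3 := mul_le_mul_of_nonneg_left b1.1 hK0
    have m4 := mul_le_mul_of_nonneg_left b1.2 hK0
    have hτd : 0 ≤ τ * d := by positivity
    have m5 : 2 * (K : ℝ) * (τ * d) ≤ 3 * h * (τ * d) := mul_le_mul_of_nonneg_right h2K hτd
    have m6 : d * (2 * S.card) ≤ d * (τ * h) := mul_le_mul_of_nonneg_left hS3 hd0
    rw [hμ v, e1', abs_le]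
    constructor <;> linarith
  -- sizes
  have hwub : ∀ v, w v ≤ 5 * n ^ 2 := by
    intro v
    have h1 : w v ≤ G.degree v * (1 + h + 2 * K + 2 * S.card) :=
      weightedDeg_le G f0 _ (fun e => by
        have := (hz1 e).2; have := hr1 e; simp only [hf0]; omega) v
    have h2 : G.degree v ≤ n := by rw [← hn]; exact (G.degree_lt_card_verts v).le
    have h3 : (1 + h + 2 * K + 2 * S.card : ℕ) ≤ 5 * n := by
      have hδ4 : (n : ℝ) / δ ≤ n / 4 := by
        apply div_le_div_of_nonneg_left hnp.le (by norm_num)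
        refine le_trans ?_ hδMr
        have : (1 : ℝ) ≤ (M : ℝ) ^ 4 := one_le_pow₀ (by linarith)
        nlinarith
      have hSn : (S.card : ℝ) ≤ n := by rw [← hn]; exact_mod_cast card_le_univ S
      have h10 : (10 : ℝ) / M ≤ 1 := by rw [div_le_one hMp]; exact hM10
      have hh4 : (h : ℝ) ≤ n / 4 * 2 + 1 := by
        refine hh2.trans ?_
        have : (n : ℝ) / δ * (1 + 10 / M) ≤ n / 4 * 2 := by
          apply mul_le_mul hδ4 (by linarith) (by positivity) (by positivity)
        linarith
      have hn100 : (100 : ℝ) ≤ n := by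
        rw [hnU]; nlinarith
      have : (1 + h + 2 * K + 2 * S.card : ℝ) ≤ 5 * n := by
        rw [hn8] at hK2; linarith
      exact_mod_cast this
    calc w v ≤ _ := h1
      _ ≤ n * (5 * n) := Nat.mul_le_mul h2 h3
      _ = 5 * n ^ 2 := by ring
  -- extra range
  set E : ℕ := ⌊2 ^ 12 * U⌋₊ with hE
  have hE1 : (E : ℝ) ≤ 2 ^ 12 * U := Nat.floor_le (by positivity)
  have hE2 : 2 ^ 12 * U - 1 ≤ E := (Nat.sub_one_lt_floor _).le
  have hEK : ∀ (v : V) (c : ℕ), q * G.degree v / 8 ≤ (c : ℝ) → E ≤ c * K := by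
    intro v c hc
    have h1 : q * δ / 8 ≤ (c : ℝ) := by
      refine le_trans ?_ hc
      have : (δ : ℝ) ≤ G.degree v := by exact_mod_cast hdeg v
      have := mul_le_mul_of_nonneg_left this hqp0.le
      linarith
    have h2 : q * δ / 8 * (n / (8 * δ)) ≤ (c : ℝ) * K :=
      mul_le_mul h1 hK1 (by positivity) (by positivity)
    have h3 : q * δ / 8 * (n / (8 * δ)) = q * n / 64 := by field_simp; norm_num
    have : (E : ℝ) ≤ c * K := by
      rw [h3, hqn] at h2; linarith
    exact_mod_cast this
  -- placing A
  have hA'D : ∀ v ∈ A', v ∉ D := fun v hv => Finset.disjoint_left.mp hAD (hA' hv)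
  have hC'D : ∀ v ∈ C', v ∉ D := fun v hv => Finset.disjoint_left.mp hCD (hC' hv)
  have hsubwin : ∀ W W' : Finset V, W' ⊆ W → (∀ v ∈ W', v ∉ D) → (∀ v ∈ W', v ∉ Bad) →
      ∀ y1 y2 : ℕ, ((W'.filter fun v => y1 ≤ w v ∧ w v ≤ y2).card : ℝ) ≤
      ((W.filter fun v => (y1 : ℝ) - 5 * τ * h * G.degree v ≤ μ v ∧
        μ v ≤ y2 + 5 * τ * h * G.degree v).card : ℝ) := by
    intro W W' hWW hWD hWB y1 y2
    have : (W'.filter fun v => y1 ≤ w v ∧ w v ≤ y2) ⊆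
      (W.filter fun v => (y1 : ℝ) - 5 * τ * h * G.degree v ≤ μ v ∧
        μ v ≤ y2 + 5 * τ * h * G.degree v) := by
      intro v hv
      rw [mem_filter] at hv ⊢
      have h1 := abs_le.mp (hclose v (hWD v hv.1) (hWB v hv.1))
      have h2 : (y1 : ℝ) ≤ w v := by exact_mod_cast hv.2.1
      have h3 : (w v : ℝ) ≤ y2 := by exact_mod_cast hv.2.2
      exact ⟨hWW hv.1, by linarith, by linarith⟩
    exact_mod_cast card_le_card this
  have hRc : ((Finset.range M).filter fun i => 3 ≤ i).card = M - 3 := by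
    have : (Finset.range M).filter (fun i => 3 ≤ i) = Finset.Ico 3 M := by
      ext i; simp; omega
    rw [this, Nat.card_Ico]
  have hRcr : (((M - 3 : ℕ) : ℕ) : ℝ) = M - 3 := by
    rw [Nat.cast_sub (by omega)]; norm_num
  obtain ⟨tA, htA1, htA2⟩ := place_in_blocks A' w K M E hKp
    ((Finset.range M).filter fun i => 3 ≤ i) (filter_subset _ _) (S.image w)
    (1 - 4 / M) (22 * τ * n) (by omega)
    (by
      rw [hRc, hRcr, sub_mul, div_mul_cancel₀ _ hMp.ne']; linarith)
    (by
      rw [hRc, hRcr]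
      have h1 : ((S.image w).card : ℝ) ≤ S.card := by exact_mod_cast card_image_le
      have h2 : (S.card : ℝ) ≤ M * S.card := le_mul_of_one_le_left (Nat.cast_nonneg _) (by linarith)
      have h3 : ((M : ℝ) - 3) * K ≤ M * K := by
        apply mul_le_mul_of_nonneg_right _ (by positivity); linarith
      have h4 : (7 / 10 : ℝ) * E ≤ (M - 3) * E / M := by
        rw [le_div_iff₀ hMp]
        have : (0 : ℝ) ≤ E := by positivity
        nlinarith
      have h5 : 22 * τ * n = 176 * U := by rw [mul_assoc, hτn]; ring
      rw [h5]
      linarith)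
    (by
      intro y1 y2 h12 _ hy
      obtain ⟨v, _, hv⟩ := hy
      exact (hsubwin A A' hA' hA'D (fun v hv => (hdA v hv).1) y1 y2).trans
        (hwA y1 y2 h12 (hv ▸ hwub v)))
  obtain ⟨tC, htC1, htC2⟩ := place_in_blocks C' w K M E hKp
    {0} (by simp; omega) (S.image w ∪ S.image fun s => w s - K)
    (p * (1 - 4 / M)) (p * (22 * τ * n)) (by omega)
    (by
      rw [card_singleton, hp]
      have h0 : (0 : ℝ) ≤ 4 / M := by positivity
      have : 1 / (4 * (M : ℝ)) * (1 - 4 / M) * M = (1 - 4 / M) / 4 := by field_simp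
      rw [this]; push_cast; linarith)
    (by
      rw [card_singleton]
      have h1 : ((S.image w ∪ S.image fun s => w s - K).card : ℝ) ≤ 2 * S.card := by
        have a1 := card_union_le (S.image w) (S.image fun s => w s - K)
        have a2 : (S.image w).card ≤ S.card := card_image_le
        have a3 : (S.image fun s => w s - K).card ≤ S.card := card_image_le
        exact_mod_cast (by omega : (S.image w ∪ S.image fun s => w s - K).card ≤ 2 * S.card)
      have h5 : 22 * τ * n = 176 * U := by rw [mul_assoc, hτn]; ring
      rw [h5, hp, le_div_iff₀ hMp]
      have h6 : (1 / (4 * (M : ℝ)) * (176 * U) + (1 : ℕ) * K +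
        ((S.image w ∪ S.image fun s => w s - K).card : ℝ)) * M =
          44 * U + M * K + M * ((S.image w ∪ S.image fun s => w s - K).card : ℝ) := by
        push_cast; field_simp; ring
      rw [h6]
      have h7 := mul_le_mul_of_nonneg_left h1 hMp.le
      push_cast
      linarith)
    (by
      intro y1 y2 h12 _ hy
      obtain ⟨v, _, hv⟩ := hy
      refine (hsubwin C C' hC' hC'D (fun v hv => (hdC v hv).1) y1 y2).trans
        ((hwC y1 y2 h12 (hv ▸ hwub v)).trans (le_of_eq (by ring))))
  -- assemble
  have hmax : max h (2 * K) + 3 * K ≤ max h (2 * K) + 3 * K := le_rfl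
  have h5K : 5 * K ≤ h + 5 := by
    have : (5 : ℝ) * K ≤ h + 5 := by rw [hn8] at hK2; linarith
    exact_mod_cast this
  have hrD : ∀ u v, v ∈ D' → u ∈ A' ∨ u ∈ C' → r s(u, v) = 0 := by
    intro u v hv hu
    apply hr2
    intro s hs hsu
    rw [Sym2.mem_iff] at hsu
    rcases hsu with rfl | rfl
    · rcases hu with hu | hu
      · exact Finset.disjoint_left.mp hSA hs hu
      · exact Finset.disjoint_left.mp hSC hs hu
    · exact Finset.disjoint_left.mp hSD hs hv
  obtain ⟨f, hf⟩ := assemble G K M (h + 6 + 2 * S.card) hKp (by omega) A' C' D' S hcov'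
    (hAD.mono hA' hD') (hCD.mono hC' hD') (hAC.mono hA' hC') hSD hSA hSC f0
    (by
      intro e _
      have h1 := hz1 e
      have h2 := hz2 e
      have h3 := hr1 e
      have h4 : max h (2 * K) ≤ h + 5 := max_le (by omega) (by omega)
      simp only [hf0]
      omega)
    (by
      intro u v huv hv hu
      simp only [hf0]
      rw [hz3 u v (hD' hv), hrD u v hv hu]
      omega)
    hr3 tA tC htA1 htC1
    (by
      intro a ha
      obtain ⟨⟨h1, h2⟩, h3, h4⟩ := htA2 a ha
      refine ⟨⟨(mem_filter.mp h1).2, fun s hs he => h2 (mem_image.mpr ⟨s, hs, he.symm⟩)⟩, h3, ?_⟩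
      exact h4.trans (Nat.add_le_add_left (hEK a _ (hdA a ha).2) _))
    (by
      intro c hc
      obtain ⟨⟨h1, h2⟩, h3, h4⟩ := htC2 c hc
      rw [mem_union, not_or] at h2
      refine ⟨⟨mem_singleton.mp h1, fun s hs => ⟨fun he => h2.1 (mem_image.mpr ⟨s, hs, he.symm⟩),
        fun he => h2.2 (mem_image.mpr ⟨s, hs, ?_⟩)⟩⟩, h3, ?_⟩
      · change weightedDeg G f0 s - K = tC c
        omega
      · exact h4.trans (Nat.add_le_add_left (hEK c _ (hdC c hc).2) _))
    (by
      intro c hc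
      have h1 := (hdC c hc).2
      have h2 : (2 : ℝ) ≤ q * G.degree c / 8 := by
        have h3 : (2 : ℝ) ^ 30 * M ^ 4 ≤ G.degree c := hδMr.trans (by exact_mod_cast hdeg c)
        have h4 := mul_le_mul_of_nonneg_left h3 hqp0.le
        have h5 : q * (2 ^ 30 * (M : ℝ) ^ 4) = 2 ^ 18 * M ^ 2 := by
          rw [hq]; field_simp; try norm_num
        rw [h5] at h4
        linarith
      exact_mod_cast h2.trans h1)
    (by
      intro d hd j hj
      have h1 := hdD d hd
      have h2 : p * δ / 8 ≤ ((C'.filter fun c => G.Adj c d).card : ℝ) := by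
        refine le_trans ?_ h1
        have : (δ : ℝ) ≤ G.degree d := by exact_mod_cast hdeg d
        have := mul_le_mul_of_nonneg_left this hpp.le
        linarith
      have h3 : ((D' ∪ S).card : ℝ) ≤ 4 * q * n + S.card := by
        have a1 := card_union_le D' S
        have a2 := card_le_card hD'
        have : ((D' ∪ S).card : ℝ) ≤ D.card + S.card := by exact_mod_cast (by omega : (D' ∪ S).card ≤ D.card + S.card)
        linarith
      have hjr : (K : ℝ) * j ≤ 2 * (D' ∪ S).card + K := by exact_mod_cast hj
      have hj2 : (n : ℝ) / (8 * δ) * (j - 1) ≤ 2 * (4 * q * n + S.card) := by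
        rcases le_total (j : ℝ) 1 with hj1 | hj1
        · have : (n : ℝ) / (8 * δ) * (j - 1) ≤ 0 :=
            mul_nonpos_of_nonneg_of_nonpos (by positivity) (by linarith)
          have : 0 ≤ 2 * (4 * q * n + (S.card : ℝ)) := by
            have hs0 : (0 : ℝ) ≤ S.card := Nat.cast_nonneg _
            have := mul_pos hqp0 hnp
            linarith
          linarith
        · have : (n : ℝ) / (8 * δ) * (j - 1) ≤ K * (j - 1) :=
            mul_le_mul_of_nonneg_right hK1 (by linarith)
          linarith
      have hj3 : (j : ℝ) - 1 ≤ 64 * q * δ + 8 * τ := by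
        have a1 : (n : ℝ) * (j - 1) ≤ (8 * δ) * (2 * (4 * q * n + S.card)) := by
          have := mul_le_mul_of_nonneg_left hj2 (by positivity : (0 : ℝ) ≤ 8 * δ)
          rwa [← mul_assoc, mul_div_cancel₀ _ (by positivity)] at this
        have a2 : (n : ℝ) * (j - 1) ≤ n * (64 * q * δ + 8 * τ) := by
          have : (8 * (δ : ℝ)) * (2 * (4 * q * n + S.card)) = 64 * q * δ * n + 16 * (S.card * δ) := by ring
          rw [this] at a1
          linarith
        exact le_of_mul_le_mul_left a2 hnp
      have hτ1 : 8 * τ ≤ 1 := by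
        rw [hτq]; linarith
      have h64 : 64 * q * δ = δ / (64 * M ^ 2) := by rw [hq]; field_simp; try norm_num
      rw [h64] at hj3
      have hfin : (M : ℝ) * (j + 1) ≤ δ / (32 * M) := by
        have a1 : (M : ℝ) * (j + 1) ≤ M * (δ / (64 * M ^ 2) + 3) :=
          mul_le_mul_of_nonneg_left (by linarith) hMp.le
        have a2 : (M : ℝ) * (δ / (64 * M ^ 2) + 3) = δ / (64 * M) + 3 * M := by field_simp
        have a3 : 3 * (M : ℝ) ≤ δ / (64 * M) := by
          rw [le_div_iff₀ (by positivity)]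
          refine le_trans ?_ hδMr
          nlinarith [pow_pos hMp 2, pow_pos hMp 4]
        have a4 : (δ : ℝ) / (32 * M) = δ / (64 * M) + δ / (64 * M) := by field_simp; norm_num
        linarith
      have h32 : p * δ / 8 = δ / (32 * M) := by rw [hp]; field_simp; norm_num
      rw [h32] at h2
      have : ((M * (j + 1) : ℕ) : ℝ) ≤ ((C'.filter fun c => G.Adj c d).card : ℝ) := by
        push_cast; linarith
      have : M * (j + 1) ≤ (C'.filter fun c => G.Adj c d).card := by exact_mod_cast this
      omega)
  refine ⟨_, f, hf, ?_⟩
  push_cast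
  have hτ1 : τ ≤ 1 / M := by
    rw [hτ]
    apply one_div_le_one_div_of_le hMp
    nlinarith
  have h1 : 2 * (S.card : ℝ) ≤ n / δ * (1 / M) := by
    have : τ * ((n : ℝ) / δ) ≤ 1 / M * (n / δ) := mul_le_mul_of_nonneg_right hτ1 (by positivity)
    linarith
  have h2 : (n : ℝ) / δ * (1 + 11 / M) = n / δ * (1 + 10 / M) + n / δ * (1 / M) := by ring
  rw [h2]
  linarith

/-- Two-sided tail bound for sums of independent indicator variables. -/
lemma two_sided {V Ω : Type*} [Fintype V] [DecidableEq V] [Fintype Ω] [Nonempty Ω]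
    (s : Finset V) (c : Ω → Prop) [DecidablePred c] (m τ : ℝ)
    (hm : ((univ.filter c).card : ℝ) = m * Fintype.card Ω)
    (hm0 : 0 ≤ m) (hm1 : m ≤ 1) (hτ0 : 0 ≤ τ) (hτ1 : τ ≤ 1) (hs : 0 < s.card)
    (E : Finset (V → Ω))
    (hE : ∀ ω ∈ E, ¬ |((s.filter fun v => c (ω v)).card : ℝ) - m * s.card| ≤ τ * s.card) :
    (E.card : ℝ) ≤ 2 * Real.exp (-(τ ^ 2 * s.card / 4)) * Fintype.card (V → Ω) := by
  classical
  have hsr : (0 : ℝ) < s.card := by exact_mod_cast hs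
  have hex : (τ * s.card) ^ 2 / (4 * (s.card : ℝ)) = τ ^ 2 * s.card / 4 := by
    field_simp
  have hm' : (∑ a, if c a then (1 : ℝ) else 0) = m * Fintype.card Ω := by
    rw [← hm, natCast_card_filter]
  have t1 := tail_bound (V := V) (Ω := Ω) s (fun _ a => if c a then (1 : ℝ) else 0)
    (fun _ a => by split_ifs <;> norm_num) (fun _ a => by split_ifs <;> norm_num)
    s.card (τ * s.card) hsr (by positivity) (by nlinarith) (fun _ => m) (fun _ => hm')
    (by rw [sum_const, nsmul_eq_mul]; nlinarith)
  have t2 := tail_bound (V := V) (Ω := Ω) s (fun _ a => 1 - if c a then (1 : ℝ) else 0)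
    (fun _ a => by split_ifs <;> norm_num) (fun _ a => by split_ifs <;> norm_num)
    s.card (τ * s.card) hsr (by positivity) (by nlinarith) (fun _ => 1 - m)
    (fun _ => by
      rw [sum_sub_distrib, hm', sum_const, nsmul_eq_mul, card_univ]; ring)
    (by rw [sum_const, nsmul_eq_mul]; nlinarith)
  rw [hex] at t1 t2
  have hsub : E ⊆ (univ.filter fun ω : V → Ω => ∑ v ∈ s, m + τ * s.card ≤
        ∑ v ∈ s, if c (ω v) then (1 : ℝ) else 0) ∪
      (univ.filter fun ω : V → Ω => ∑ v ∈ s, (1 - m) + τ * s.card ≤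
        ∑ v ∈ s, (1 - if c (ω v) then (1 : ℝ) else 0)) := by
    intro ω hω
    have := hE ω hω
    rw [natCast_card_filter, abs_le, not_and_or, not_le, not_le] at this
    rw [mem_union, mem_filter, mem_filter]
    rcases this with h | h
    · right
      refine ⟨mem_univ _, ?_⟩
      rw [sum_sub_distrib, sum_sub_distrib, sum_const, sum_const, nsmul_eq_mul, nsmul_eq_mul]
      linarith
    · left
      refine ⟨mem_univ _, ?_⟩
      rw [sum_const, nsmul_eq_mul]
      linarith
  have hc := (card_le_card hsub).trans (card_union_le _ _)
  have hc' := (Nat.cast_le (α := ℝ)).mpr hc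
  push_cast at hc'
  linarith

/-- An affine function hits an interval at few integer points. -/
lemma card_affine_le (N : ℕ) (α β lo hi : ℝ) (hβ : 0 < β) (hlh : lo ≤ hi)
    (S : Finset (Fin N)) (hS : ∀ x ∈ S, lo ≤ α + β * (x : ℕ) ∧ α + β * (x : ℕ) ≤ hi) :
    (S.card : ℝ) ≤ (hi - lo) / β + 1 := by
  classical
  rcases S.eq_empty_or_nonempty with h | h
  · subst h
    have : 0 ≤ (hi - lo) / β := div_nonneg (by linarith) hβ.le
    rw [card_empty]; push_cast; linarith
  · set a := S.min' h
    set b := S.max' h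
    have hsub : S ⊆ Icc a b := fun x hx =>
      mem_Icc.mpr ⟨S.min'_le x hx, S.le_max' x hx⟩
    have h1 := card_le_card hsub
    rw [Fin.card_Icc] at h1
    have hab : (a : ℕ) ≤ b := S.min'_le b (S.max'_mem h)
    have h2 : (S.card : ℝ) ≤ (b : ℕ) + 1 - (a : ℕ) := by
      have : S.card + (a : ℕ) ≤ b + 1 := by omega
      have : (S.card : ℝ) + (a : ℕ) ≤ (b : ℕ) + 1 := by exact_mod_cast this
      linarith
    have ha := (hS a (S.min'_mem h)).1
    have hb := (hS b (S.max'_mem h)).2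
    have : ((b : ℕ) : ℝ) - (a : ℕ) ≤ (hi - lo) / β := by
      rw [le_div_iff₀ hβ]; linarith
    linarith

/-- Tail bound for the number of vertices landing in a window. -/
lemma window_bound {V : Type*} [Fintype V] [DecidableEq V] [Nonempty V] (N Q : ℕ)
    (hN : 0 < N) (hQ : 0 < Q) (cls : Fin Q → Prop) [DecidablePred cls] (π τ W : ℝ)
    (hπ : ((univ.filter cls).card : ℝ) = π * Q) (hπ0 : 0 < π)
    (hτ0 : 0 ≤ τ) (hτ1 : τ ≤ 1) (α β lo hi : V → ℝ) (hβ : ∀ v, 0 < β v)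
    (hlh : ∀ v, lo v ≤ hi v) (hW : ∀ v, (hi v - lo v) / β v + 1 ≤ W * N)
    (E : Finset (V → Fin Q × Fin N))
    (hE : ∀ ω ∈ E, π * (W * Fintype.card V + τ * Fintype.card V) <
      ((univ.filter fun v => cls (ω v).1 ∧ lo v ≤ α v + β v * ((ω v).2 : ℕ) ∧
        α v + β v * ((ω v).2 : ℕ) ≤ hi v).card : ℝ)) :
    (E.card : ℝ) ≤ Real.exp (-(τ ^ 2 * (π * Fintype.card V) / 4)) *
      Fintype.card (V → Fin Q × Fin N) := by
  classical
  have : NeZero N := ⟨hN.ne'⟩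
  have : NeZero Q := ⟨hQ.ne'⟩
  have hNr : (0 : ℝ) < N := by exact_mod_cast hN
  have hn : (0 : ℝ) < Fintype.card V := by exact_mod_cast Fintype.card_pos
  set n : ℝ := (Fintype.card V : ℝ) with hndef
  set S : V → Finset (Fin N) := fun v => univ.filter fun x : Fin N =>
    lo v ≤ α v + β v * (x : ℕ) ∧ α v + β v * (x : ℕ) ≤ hi v with hS
  have hSW : ∀ v, ((S v).card : ℝ) ≤ W * N := fun v =>
    (card_affine_le N (α v) (β v) (lo v) (hi v) (hβ v) (hlh v) (S v)
      (fun x hx => (mem_filter.mp hx).2)).trans (hW v)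
  have hSN : ∀ v, ((S v).card : ℝ) ≤ N := fun v => by
    have := card_le_univ (S v)
    rw [Fintype.card_fin] at this
    exact_mod_cast this
  have hm : ∀ v, ∑ a : Fin Q × Fin N, (if cls a.1 ∧ a.2 ∈ S v then (1 : ℝ) else 0) =
      (π * ((S v).card / N)) * Fintype.card (Fin Q × Fin N) := by
    intro v
    rw [← natCast_card_filter]
    have : (univ.filter fun a : Fin Q × Fin N => cls a.1 ∧ a.2 ∈ S v) =
        (univ.filter cls) ×ˢ (S v) := by
      ext a; simp [mem_product]
    rw [this, card_product, Fintype.card_prod, Fintype.card_fin, Fintype.card_fin]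
    push_cast
    rw [hπ]; field_simp
  have hm1 : ∀ v, π * (((S v).card : ℝ) / N) ≤ π := fun v => by
    have : ((S v).card : ℝ) / N ≤ 1 := by rw [div_le_one hNr]; exact hSN v
    nlinarith
  have hm2 : ∀ v, π * (((S v).card : ℝ) / N) ≤ π * W := fun v => by
    have : ((S v).card : ℝ) / N ≤ W := by rw [div_le_iff₀ hNr]; exact hSW v
    nlinarith
  have t1 := tail_bound (V := V) (Ω := Fin Q × Fin N) univ
    (fun v a => if cls a.1 ∧ a.2 ∈ S v then (1 : ℝ) else 0)
    (fun _ a => by split_ifs <;> norm_num) (fun _ a => by split_ifs <;> norm_num)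
    (π * n) (τ * (π * n)) (by positivity) (by positivity)
    (by have : 0 < π * n := by positivity
        nlinarith)
    (fun v => π * ((S v).card / N)) hm
    (by
      refine (sum_le_sum fun v _ => hm1 v).trans (le_of_eq ?_)
      rw [sum_const, nsmul_eq_mul, card_univ, mul_comm])
  have hex : (τ * (π * n)) ^ 2 / (4 * (π * n)) = τ ^ 2 * (π * n) / 4 := by
    field_simp
  rw [hex] at t1
  refine le_trans ?_ t1
  have hsum : ∑ v : V, π * (((S v).card : ℝ) / N) ≤ n * (π * W) := by
    refine (sum_le_sum fun v _ => hm2 v).trans (le_of_eq ?_)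
    rw [sum_const, nsmul_eq_mul, card_univ]
  rw [Nat.cast_le]
  refine card_le_card fun ω hω => ?_
  rw [mem_filter]
  refine ⟨mem_univ _, ?_⟩
  have h1 := hE ω hω
  rw [← natCast_card_filter]
  have h2 : (univ.filter fun v => cls (ω v).1 ∧ lo v ≤ α v + β v * ((ω v).2 : ℕ) ∧
        α v + β v * ((ω v).2 : ℕ) ≤ hi v) =
      (univ.filter fun v => cls (ω v).1 ∧ (ω v).2 ∈ S v) := by
    apply filter_congr; intro v _; simp [hS]
  rw [h2] at h1
  linarith

/-- The probability that a fixed vertex is bad. -/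
lemma bad_vertex_bound {V : Type*} [Fintype V] [DecidableEq V] (N Q P : ℕ)
    (hN : 0 < N) (hP : P + 1 ≤ Q) (q p τ : ℝ) (hq : q = 1 / Q) (hp : p = P / Q)
    (hτ0 : 0 ≤ τ) (hτ1 : τ ≤ 1) (s : Finset V) (hs : 0 < s.card)
    (E : Finset (V → Fin Q × Fin N))
    (hE : ∀ ω ∈ E, ¬ (
      |((s.filter fun u => ((ω u).1 : ℕ) = 0).card : ℝ) - q * s.card| ≤ τ * s.card ∧
      |((s.filter fun u => 1 ≤ ((ω u).1 : ℕ) ∧ ((ω u).1 : ℕ) ≤ P).card : ℝ) - p * s.card| ≤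
        τ * s.card ∧
      ∀ a < N, |((s.filter fun u => ((ω u).1 : ℕ) ≠ 0 ∧ N ≤ ((ω u).2 : ℕ) + a).card : ℝ)
        - (1 - q) * (a / N) * s.card| ≤ τ * s.card)) :
    (E.card : ℝ) ≤ (N + 2) * (2 * Real.exp (-(τ ^ 2 * s.card / 4))) *
      Fintype.card (V → Fin Q × Fin N) := by
  classical
  have hQ : 0 < Q := by omega
  have : NeZero N := ⟨hN.ne'⟩
  have : NeZero Q := ⟨hQ.ne'⟩
  have hNr : (0 : ℝ) < N := by exact_mod_cast hN
  have hQr : (0 : ℝ) < Q := by exact_mod_cast hQ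
  have hQ1 : (1 : ℝ) ≤ Q := by exact_mod_cast hQ
  have hPr : (P : ℝ) ≤ Q := by exact_mod_cast (by omega : P ≤ Q)
  have hcard : (Fintype.card (Fin Q × Fin N) : ℝ) = Q * N := by
    rw [Fintype.card_prod, Fintype.card_fin, Fintype.card_fin]; push_cast; ring
  have c1 : (univ.filter fun i : Fin Q => (i : ℕ) = 0).card = 1 := by
    rw [card_eq_one]
    refine ⟨⟨0, hQ⟩, ?_⟩
    ext i; simp only [mem_filter, mem_univ, true_and, mem_singleton, Fin.ext_iff]
  have c1' : (univ.filter fun i : Fin Q => (i : ℕ) ≠ 0).card = Q - 1 := by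
    have := card_filter_add_card_filter_not (s := (univ : Finset (Fin Q)))
      (fun i : Fin Q => (i : ℕ) = 0)
    rw [c1, card_univ, Fintype.card_fin] at this
    have e : (univ.filter fun i : Fin Q => ¬ (i : ℕ) = 0).card = Q - 1 := by omega
    exact e
  have c2 : (univ.filter fun i : Fin Q => 1 ≤ (i : ℕ) ∧ (i : ℕ) ≤ P).card = P := by
    have : ((univ.filter fun i : Fin Q => 1 ≤ (i : ℕ) ∧ (i : ℕ) ≤ P).map
        Fin.valEmbedding) = Icc 1 P := by
      ext i
      simp only [mem_map, mem_filter, mem_univ, true_and, Fin.valEmbedding_apply, mem_Icc]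
      constructor
      · rintro ⟨a, ha, rfl⟩; exact ha
      · intro hi; exact ⟨⟨i, by omega⟩, hi, rfl⟩
    rw [← card_map Fin.valEmbedding, this, Nat.card_Icc]; omega
  have c3 : ∀ a < N, (univ.filter fun i : Fin N => N ≤ (i : ℕ) + a).card = a := by
    intro a ha
    have : ((univ.filter fun i : Fin N => N ≤ (i : ℕ) + a).map
        Fin.valEmbedding) = Ico (N - a) N := by
      ext i
      simp only [mem_map, mem_filter, mem_univ, true_and, Fin.valEmbedding_apply, mem_Ico]
      constructor
      · rintro ⟨b, hb, rfl⟩; have := b.2; omega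
      · intro hi; exact ⟨⟨i, by omega⟩, by simp only; omega, rfl⟩
    rw [← card_map Fin.valEmbedding, this, Nat.card_Ico]; omega
  set X : ℝ := 2 * Real.exp (-(τ ^ 2 * s.card / 4)) * Fintype.card (V → Fin Q × Fin N) with hX
  set E1 := E.filter fun ω =>
    ¬ |((s.filter fun u => ((ω u).1 : ℕ) = 0).card : ℝ) - q * s.card| ≤ τ * s.card with hE1
  set E2 := E.filter fun ω =>
    ¬ |((s.filter fun u => 1 ≤ ((ω u).1 : ℕ) ∧ ((ω u).1 : ℕ) ≤ P).card : ℝ) - p * s.card| ≤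
      τ * s.card with hE2
  set E3 : ℕ → Finset (V → Fin Q × Fin N) := fun a => E.filter fun ω =>
    ¬ |((s.filter fun u => ((ω u).1 : ℕ) ≠ 0 ∧ N ≤ ((ω u).2 : ℕ) + a).card : ℝ)
        - (1 - q) * (a / N) * s.card| ≤ τ * s.card with hE3
  have hq0 : 0 ≤ q := by rw [hq]; positivity
  have hq1 : q ≤ 1 := by rw [hq, div_le_one hQr]; exact hQ1
  have b1 : (E1.card : ℝ) ≤ X := by
    apply two_sided s (fun a : Fin Q × Fin N => (a.1 : ℕ) = 0) q τ _ hq0 hq1 hτ0 hτ1 hs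
    · intro ω hω; exact (mem_filter.mp hω).2
    · have : (univ.filter fun a : Fin Q × Fin N => (a.1 : ℕ) = 0) =
        (univ.filter fun i : Fin Q => (i : ℕ) = 0) ×ˢ univ := by
        ext a; simp [mem_product]
      rw [this, card_product, c1, card_univ, Fintype.card_fin, hcard, hq]
      push_cast; field_simp
  have b2 : (E2.card : ℝ) ≤ X := by
    apply two_sided s (fun a : Fin Q × Fin N => 1 ≤ (a.1 : ℕ) ∧ (a.1 : ℕ) ≤ P) p τ _
      (by rw [hp]; positivity) (by rw [hp, div_le_one hQr]; exact hPr) hτ0 hτ1 hs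
    · intro ω hω; exact (mem_filter.mp hω).2
    · have : (univ.filter fun a : Fin Q × Fin N => 1 ≤ (a.1 : ℕ) ∧ (a.1 : ℕ) ≤ P) =
        (univ.filter fun i : Fin Q => 1 ≤ (i : ℕ) ∧ (i : ℕ) ≤ P) ×ˢ univ := by
        ext a; simp [mem_product]
      rw [this, card_product, c2, card_univ, Fintype.card_fin, hcard, hp]
      push_cast; field_simp
  have b3 : ∀ a ∈ range N, ((E3 a).card : ℝ) ≤ X := by
    intro a ha
    have ha' := mem_range.mp ha
    have har : (a : ℝ) / N ≤ 1 := by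
      rw [div_le_one hNr]; exact_mod_cast ha'.le
    have ha0 : 0 ≤ (a : ℝ) / N := by positivity
    apply two_sided s (fun b : Fin Q × Fin N => (b.1 : ℕ) ≠ 0 ∧ N ≤ (b.2 : ℕ) + a)
      ((1 - q) * (a / N)) τ _ (mul_nonneg (by linarith) ha0)
      (mul_le_one₀ (by linarith) ha0 har) hτ0 hτ1 hs
    · intro ω hω; exact (mem_filter.mp hω).2
    · have : (univ.filter fun b : Fin Q × Fin N => (b.1 : ℕ) ≠ 0 ∧ N ≤ (b.2 : ℕ) + a) =
        (univ.filter fun i : Fin Q => (i : ℕ) ≠ 0) ×ˢ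
          (univ.filter fun i : Fin N => N ≤ (i : ℕ) + a) := by
        ext b; simp [mem_product]
      rw [this, card_product, c1', c3 a ha', hcard, hq]
      push_cast [Nat.cast_sub hQ]
      field_simp
  have hsub : E ⊆ (E1 ∪ E2) ∪ (range N).biUnion E3 := by
    intro ω hω
    have h := hE ω hω
    by_contra hn
    rw [mem_union, mem_union, mem_biUnion, not_or, not_or] at hn
    apply h
    refine ⟨?_, ?_, ?_⟩
    · by_contra h1; exact hn.1.1 (mem_filter.mpr ⟨hω, h1⟩)
    · by_contra h1; exact hn.1.2 (mem_filter.mpr ⟨hω, h1⟩)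
    · intro a ha
      by_contra h1; exact hn.2 ⟨a, mem_range.mpr ha, mem_filter.mpr ⟨hω, h1⟩⟩
  have hc := (card_le_card hsub).trans ((card_union_le _ _).trans
    (add_le_add (card_union_le _ _) card_biUnion_le))
  have hc' := (Nat.cast_le (α := ℝ)).mpr hc
  push_cast at hc'
  have hs3 := sum_le_sum b3
  rw [sum_const, nsmul_eq_mul, card_range] at hs3
  rw [hX] at b1 b2 hs3
  linarith

lemma card_fin_zero (Q : ℕ) (hQ : 0 < Q) :
    (univ.filter fun i : Fin Q => (i : ℕ) = 0).card = 1 := by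
  rw [card_eq_one]
  refine ⟨⟨0, hQ⟩, ?_⟩
  ext i; simp only [mem_filter, mem_univ, true_and, mem_singleton, Fin.ext_iff]

lemma card_fin_Icc (Q P : ℕ) (hP : P + 1 ≤ Q) :
    (univ.filter fun i : Fin Q => 1 ≤ (i : ℕ) ∧ (i : ℕ) ≤ P).card = P := by
  have : ((univ.filter fun i : Fin Q => 1 ≤ (i : ℕ) ∧ (i : ℕ) ≤ P).map
      Fin.valEmbedding) = Icc 1 P := by
    ext i
    simp only [mem_map, mem_filter, mem_univ, true_and, Fin.valEmbedding_apply, mem_Icc]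
    constructor
    · rintro ⟨a, ha, rfl⟩; exact ha
    · intro hi; exact ⟨⟨i, by omega⟩, hi, rfl⟩
  rw [← card_map Fin.valEmbedding, this, Nat.card_Icc]; omega

/-- Markov inequality for counting. -/
lemma markov_count {Ω : Type*} (s E : Finset Ω) (hE : E ⊆ s) (g : Ω → ℝ)
    (hg : ∀ ω ∈ s, 0 ≤ g ω) (t B : ℝ) (hgt : ∀ ω ∈ E, t ≤ g ω)
    (hB : ∑ ω ∈ s, g ω ≤ B) : t * E.card ≤ B := by
  have h1 : ∑ ω ∈ E, t ≤ ∑ ω ∈ E, g ω := sum_le_sum hgt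
  have h2 : ∑ ω ∈ E, g ω ≤ ∑ ω ∈ s, g ω :=
    sum_le_sum_of_subset_of_nonneg hE fun ω hω _ => hg ω hω
  rw [sum_const, nsmul_eq_mul] at h1
  linarith

set_option maxHeartbeats 1000000 in
lemma prob_exists {V : Type*} [Fintype V] [DecidableEq V] [Nonempty V] (G : SimpleGraph V)
    [DecidableRel G.Adj] (n δ M h N Q P K : ℕ) (hn : Fintype.card V = n) (hM : 10 ≤ M)
    (hδ : 0 < δ) (hdeg : ∀ v, δ ≤ G.degree v) (hN : 0 < N) (hP : P + 1 ≤ Q) (hP0 : 0 < P)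
    (q p τ η : ℝ) (hq : q = 1 / Q) (hp : p = P / Q) (hτ : τ = 1 / N) (hη : 0 < η)
    (hqM : q ≤ 1 / (10 * M)) (hτq : τ ≤ q)
    (hh1 : (n : ℝ) / δ * (1 + 10 / M) ≤ h)
    (hI1 : ∀ d : ℕ, δ ≤ d → (d : ℝ) * ((N + 2) * (2 * Real.exp (-(τ ^ 2 * d / 4)))) ≤ η / 4)
    (hI2 : (5 * (n : ℝ) ^ 2 + 1) ^ 2 * Real.exp (-(τ ^ 2 * (p * n) / 4)) ≤ 1 / 8) :
    ∃ (A C D Bad : Finset V) (x : V → ℕ), Disjoint A C ∧ Disjoint A D ∧ Disjoint C D ∧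
    (∀ v, v ∈ A ∨ v ∈ C ∨ v ∈ D) ∧ (∀ v, x v < N) ∧
    (∀ v, v ∉ Bad → |((D.filter fun u => G.Adj v u).card : ℝ) - q * G.degree v| ≤ τ * G.degree v) ∧
    (∀ v, v ∉ Bad → |((C.filter fun u => G.Adj v u).card : ℝ) - p * G.degree v| ≤ τ * G.degree v) ∧
    (∀ v, v ∉ Bad → ∀ a < N,
      |(((univ.filter fun u => u ∉ D ∧ N ≤ x u + a).filter fun u => G.Adj v u).card : ℝ)
        - (1 - q) * (a / N) * G.degree v| ≤ τ * G.degree v) ∧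
    (∑ v ∈ Bad, (G.degree v : ℝ) ≤ η * n) ∧
    ((D.card : ℝ) ≤ 4 * q * n) ∧
    (∀ y1 y2 : ℕ, y1 ≤ y2 → y2 ≤ 5 * n ^ 2 →
      ((A.filter fun v => (y1 : ℝ) - 5 * τ * h * G.degree v ≤
          G.degree v * (1 + h * ((1 - q) * (x v / N)) + 2 * K * q) ∧
        G.degree v * (1 + h * ((1 - q) * (x v / N)) + 2 * K * q) ≤
          y2 + 5 * τ * h * G.degree v).card : ℝ) ≤
        (1 - 4 / M) * ((y2 : ℝ) - y1) + 22 * τ * n) ∧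
    (∀ y1 y2 : ℕ, y1 ≤ y2 → y2 ≤ 5 * n ^ 2 →
      ((C.filter fun v => (y1 : ℝ) - 5 * τ * h * G.degree v ≤
          G.degree v * (1 + h * ((1 - q) * (x v / N)) + 2 * K * q) ∧
        G.degree v * (1 + h * ((1 - q) * (x v / N)) + 2 * K * q) ≤
          y2 + 5 * τ * h * G.degree v).card : ℝ) ≤
          p * ((1 - 4 / M) * ((y2 : ℝ) - y1) + 22 * τ * n)) := by
  classical
  have hQ : 0 < Q := by omega
  have : NeZero N := ⟨hN.ne'⟩
  have : NeZero Q := ⟨hQ.ne'⟩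
  have hNr : (0 : ℝ) < N := by exact_mod_cast hN
  have hN1 : (1 : ℝ) ≤ N := by exact_mod_cast hN
  have hQr : (0 : ℝ) < Q := by exact_mod_cast hQ
  have hδr : (0 : ℝ) < δ := by exact_mod_cast hδ
  have hM10 : (10 : ℝ) ≤ M := by exact_mod_cast hM
  have hMp : (0 : ℝ) < M := by linarith
  have hnn : 0 < n := by rw [← hn]; exact Fintype.card_pos
  have hnr : (0 : ℝ) < n := by exact_mod_cast hnn
  have hq0 : 0 < q := by rw [hq]; positivity
  have hqs : q ≤ 1 / 100 := hqM.trans (one_div_le_one_div_of_le (by norm_num) (by linarith))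
  have hp0 : 0 < p := by
    have : (0 : ℝ) < P := by exact_mod_cast hP0
    rw [hp]; positivity
  have hp1 : p ≤ 1 := by
    rw [hp, div_le_one hQr]; exact_mod_cast (by omega : P ≤ Q)
  have hτ0 : 0 < τ := by rw [hτ]; positivity
  have hτ1 : τ ≤ 1 := by rw [hτ, div_le_one hNr]; exact hN1
  have hτN : τ * N = 1 := by rw [hτ]; field_simp
  have hhp : (0 : ℝ) < h := lt_of_lt_of_le (by positivity) hh1
  -- ratio bound
  have hrat : (n : ℝ) / (δ * (h * (1 - q))) ≤ 1 - 4 / M := by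
    have hq1 : 0 < 1 - q := by linarith
    rw [div_le_iff₀ (by positivity)]
    have h1 : (n : ℝ) * (1 + 10 / M) ≤ δ * h := by
      have := mul_le_mul_of_nonneg_left hh1 hδr.le
      rw [← mul_assoc, mul_div_cancel₀ _ hδr.ne'] at this
      exact this
    set t : ℝ := 1 / M with ht
    have ht0 : 0 < t := by positivity
    have ht1 : t ≤ 1 / 10 := one_div_le_one_div_of_le (by norm_num) hM10
    have e1 : (10 : ℝ) / M = 10 * t := by rw [ht]; ring
    have e2 : (4 : ℝ) / M = 4 * t := by rw [ht]; ring
    have hqt : q ≤ t / 10 := by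
      refine hqM.trans (le_of_eq ?_); rw [ht]; field_simp
    rw [e1] at h1; rw [e2]
    have h2 : 1 + 2 * t ≤ (1 - 4 * t) * (1 + 10 * t) := by nlinarith
    have h3 : 1 ≤ (1 - q) * (1 + 2 * t) := by nlinarith
    have h4 : 1 ≤ (1 - 4 * t) * (1 - q) * (1 + 10 * t) := by nlinarith
    have h5 : 0 ≤ (1 - 4 * t) * (1 - q) := mul_nonneg (by linarith) hq1.le
    nlinarith [mul_le_mul_of_nonneg_left h1 h5]
  set Ω := V → Fin Q × Fin N with hΩ
  set T : ℝ := (Fintype.card Ω : ℝ) with hT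
  have hTp : 0 < T := by rw [hT]; exact_mod_cast Fintype.card_pos
  have hTu : (((univ : Finset Ω).card : ℕ) : ℝ) = T := by rw [card_univ]
  -- good vertex predicate
  set good : Ω → V → Prop := fun ω v =>
    |((((G.neighborFinset v).filter fun u => ((ω u).1 : ℕ) = 0).card : ℕ) : ℝ) - q * G.degree v| ≤ τ * G.degree v ∧
    |((((G.neighborFinset v).filter fun u => 1 ≤ ((ω u).1 : ℕ) ∧ ((ω u).1 : ℕ) ≤ P).card : ℕ) : ℝ)
      - p * G.degree v| ≤ τ * G.degree v ∧
    ∀ a < N, |((((G.neighborFinset v).filter fun u => ((ω u).1 : ℕ) ≠ 0 ∧ N ≤ ((ω u).2 : ℕ) + a).card : ℕ) : ℝ)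
      - (1 - q) * (a / N) * G.degree v| ≤ τ * G.degree v with hgood
  set vol : Ω → ℝ := fun ω => ∑ v ∈ univ.filter (fun v => ¬ good ω v), (G.degree v : ℝ) with hvol
  set E1 : Finset Ω := univ.filter fun ω => η * n < vol ω with hE1
  have bE1 : (E1.card : ℝ) ≤ T / 4 := by
    have hb : ∀ v, (((univ : Finset Ω).filter fun ω => ¬ good ω v).card : ℝ) ≤
        (N + 2) * (2 * Real.exp (-(τ ^ 2 * G.degree v / 4))) * T := by
      intro v
      have hd := bad_vertex_bound N Q P hN hP q p τ hq hp hτ0.le hτ1 (G.neighborFinset v)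
        (by rw [G.card_neighborFinset_eq_degree]; exact hδ.trans_le (hdeg v))
        ((univ : Finset Ω).filter fun ω => ¬ good ω v)
        (fun ω hω => by
          rw [G.card_neighborFinset_eq_degree]; exact (mem_filter.mp hω).2)
      rw [G.card_neighborFinset_eq_degree] at hd
      exact hd
    have hsum : ∑ ω : Ω, vol ω ≤ n * (η / 4 * T) := by
      have : ∀ ω, vol ω = ∑ v, if ¬ good ω v then (G.degree v : ℝ) else 0 := fun ω => by
        rw [hvol]; exact sum_filter _ _
      rw [sum_congr rfl fun ω _ => this ω, sum_comm]
      have h1 : ∀ v ∈ (univ : Finset V),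
          ∑ ω : Ω, (if ¬ good ω v then (G.degree v : ℝ) else 0) ≤ η / 4 * T := by
        intro v _
        rw [← sum_filter, sum_const, nsmul_eq_mul]
        have h2 := mul_le_mul_of_nonneg_right (hb v) (Nat.cast_nonneg (α := ℝ) (G.degree v))
        have h3 := mul_le_mul_of_nonneg_right (hI1 _ (hdeg v)) hTp.le
        linarith
      refine (sum_le_sum h1).trans (le_of_eq ?_)
      rw [sum_const, nsmul_eq_mul, card_univ, hn]
    have := markov_count univ E1 (subset_univ _) vol
      (fun ω _ => sum_nonneg fun v _ => Nat.cast_nonneg _) (η * n) _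
      (fun ω hω => (mem_filter.mp hω).2.le) hsum
    have h0 : 0 < η * n := by positivity
    have h1 : η * n * E1.card ≤ η * n * (T / 4) := by linarith
    exact le_of_mul_le_mul_left h1 h0
  -- size of D
  set E2 : Finset Ω := univ.filter fun ω =>
    4 * q * n < ((univ.filter fun v => ((ω v).1 : ℕ) = 0).card : ℝ) with hE2
  have bE2 : (E2.card : ℝ) ≤ T / 4 := by
    have hqn : 0 < q * n := by positivity
    have hΩc : (Fintype.card (Fin Q × Fin N) : ℝ) = Q * N := by
      rw [Fintype.card_prod, Fintype.card_fin, Fintype.card_fin]; push_cast; ring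
    have t1 := tail_bound (V := V) (Ω := Fin Q × Fin N) univ
      (fun _ a => if (a.1 : ℕ) = 0 then (1 : ℝ) else 0)
      (fun _ a => by split_ifs <;> norm_num) (fun _ a => by split_ifs <;> norm_num)
      (2 * (q * n)) (3 * (q * n)) (by positivity) (by positivity) (by linarith)
      (fun _ => q)
      (fun _ => by
        rw [← natCast_card_filter]
        have : (univ.filter fun a : Fin Q × Fin N => (a.1 : ℕ) = 0) =
          (univ.filter fun i : Fin Q => (i : ℕ) = 0) ×ˢ univ := by
          ext a; simp [mem_product]
        rw [this, card_product, card_fin_zero Q hQ, card_univ, Fintype.card_fin, hΩc, hq]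
        push_cast; field_simp)
      (by rw [sum_const, nsmul_eq_mul, card_univ, hn]; linarith)
    have hsub : E2 ⊆ (univ.filter fun ω : V → Fin Q × Fin N => ∑ v : V, q + 3 * (q * n) ≤
        ∑ v : V, if ((ω v).1 : ℕ) = 0 then (1 : ℝ) else 0) := by
      intro ω hω
      have h1 := (mem_filter.mp hω).2
      rw [natCast_card_filter] at h1
      rw [mem_filter]
      refine ⟨mem_univ _, ?_⟩
      rw [sum_const, nsmul_eq_mul, card_univ, hn]
      linarith
    have h2 := (Nat.cast_le (α := ℝ)).mpr (card_le_card hsub)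
    have hex : Real.exp (-((3 * (q * n)) ^ 2 / (4 * (2 * (q * n))))) ≤ 1 / 8 := by
      have e : (3 * (q * n)) ^ 2 / (4 * (2 * (q * n))) = 9 / 8 * (q * n) := by
        field_simp; norm_num
      rw [e]
      have h3 : Real.exp (-(9 / 8 * (q * n))) ≤ Real.exp (-(τ ^ 2 * (p * n) / 4)) := by
        apply Real.exp_le_exp.mpr
        have h4 : τ ^ 2 * p ≤ q := by
          have : τ ^ 2 ≤ τ := by nlinarith
          have : τ ^ 2 * p ≤ τ ^ 2 * 1 := mul_le_mul_of_nonneg_left hp1 (sq_nonneg _)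
          linarith
        have h5 := mul_le_mul_of_nonneg_right h4 hnr.le
        linarith
      have h6 : Real.exp (-(τ ^ 2 * (p * n) / 4)) ≤
          (5 * (n : ℝ) ^ 2 + 1) ^ 2 * Real.exp (-(τ ^ 2 * (p * n) / 4)) := by
        apply le_mul_of_one_le_left (Real.exp_pos _).le
        apply one_le_pow₀
        have := sq_nonneg (n : ℝ)
        linarith
      linarith
    have h7 := mul_le_mul_of_nonneg_right hex hTp.le
    linarith [h2.trans t1]
  -- windows
  set W : ℕ → ℕ → ℝ := fun y1 y2 => ((y2 : ℝ) - y1) / (δ * (h * (1 - q))) + 12 * τ with hW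
  have hWn : ∀ y1 y2 : ℕ, y1 ≤ y2 →
      W y1 y2 * n + τ * n ≤ (1 - 4 / M) * ((y2 : ℝ) - y1) + 22 * τ * n := by
    intro y1 y2 hy
    have hy' : (0 : ℝ) ≤ (y2 : ℝ) - y1 := by
      have : (y1 : ℝ) ≤ y2 := by exact_mod_cast hy
      linarith
    have h1 := mul_le_mul_of_nonneg_right hrat hy'
    have h2 : ((y2 : ℝ) - y1) / (δ * (h * (1 - q))) * n =
      (n : ℝ) / (δ * (h * (1 - q))) * ((y2 : ℝ) - y1) := by ring
    rw [hW]; simp only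
    rw [add_mul, h2]
    have := mul_pos hτ0 hnr
    linarith
  set win : Ω → ℕ → ℕ → V → Prop := fun ω y1 y2 v =>
    (y1 : ℝ) - 5 * τ * h * G.degree v ≤
        G.degree v * (1 + h * ((1 - q) * (((ω v).2 : ℕ) / N)) + 2 * K * q) ∧
      G.degree v * (1 + h * ((1 - q) * (((ω v).2 : ℕ) / N)) + 2 * K * q) ≤
        y2 + 5 * τ * h * G.degree v with hwin
  have key : ∀ (cls : Fin Q → Prop) (π : ℝ),
      ((univ.filter cls).card : ℝ) = π * Q → p ≤ π → ∀ y1 y2 : ℕ, y1 ≤ y2 →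
      (((univ : Finset Ω).filter fun ω => π * ((1 - 4 / M) * ((y2 : ℝ) - y1) + 22 * τ * n) <
        ((univ.filter fun v => cls (ω v).1 ∧ win ω y1 y2 v).card : ℝ)).card : ℝ) ≤
      Real.exp (-(τ ^ 2 * (p * n) / 4)) * T := by
    intro cls π hπ hpπ y1 y2 hy
    have hπ0 : 0 < π := hp0.trans_le hpπ
    have hy' : (0 : ℝ) ≤ (y2 : ℝ) - y1 := by
      have : (y1 : ℝ) ≤ y2 := by exact_mod_cast hy
      linarith
    have hq1 : 0 < 1 - q := by linarith
    have hdp : ∀ v, (0 : ℝ) < G.degree v := fun v => by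
      exact_mod_cast hδ.trans_le (hdeg v)
    have wb := window_bound (V := V) N Q hN hQ cls π τ (W y1 y2) hπ hπ0 hτ0.le hτ1
      (fun v => G.degree v * (1 + 2 * K * q))
      (fun v => G.degree v * (h * (1 - q)) / N)
      (fun v => (y1 : ℝ) - 5 * τ * h * G.degree v)
      (fun v => (y2 : ℝ) + 5 * τ * h * G.degree v)
      (fun v => by have := hdp v; positivity)
      (fun v => by
        have := hdp v
        have : 0 < τ * h * G.degree v := by positivity
        linarith)
      (fun v => by
        have hd := hdp v
        have e1 : ((y2 : ℝ) + 5 * τ * h * G.degree v - (y1 - 5 * τ * h * G.degree v)) /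
            (G.degree v * (h * (1 - q)) / N) =
            (((y2 : ℝ) - y1) / (G.degree v * (h * (1 - q))) + 10 * τ / (1 - q)) * N := by
          field_simp
          ring
        rw [e1]
        have h1 : ((y2 : ℝ) - y1) / (G.degree v * (h * (1 - q))) ≤
            ((y2 : ℝ) - y1) / (δ * (h * (1 - q))) := by
          apply div_le_div_of_nonneg_left hy' (by positivity)
          apply mul_le_mul_of_nonneg_right _ (by positivity)
          exact_mod_cast hdeg v
        have h2 : 10 * τ / (1 - q) ≤ 11 * τ := by
          rw [div_le_iff₀ hq1]; nlinarith
        rw [hW]; simp only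
        have h3 := mul_le_mul_of_nonneg_right (add_le_add h1 h2) hNr.le
        linarith)
      ((univ : Finset Ω).filter fun ω => π * ((1 - 4 / M) * ((y2 : ℝ) - y1) + 22 * τ * n) <
        ((univ.filter fun v => cls (ω v).1 ∧ win ω y1 y2 v).card : ℝ))
      (fun ω hω => by
        have h1 := (mem_filter.mp hω).2
        rw [hn]
        refine lt_of_le_of_lt (mul_le_mul_of_nonneg_left (hWn y1 y2 hy) hπ0.le) (h1.trans_le ?_)
        rw [Nat.cast_le]
        refine card_le_card fun v hv => ?_
        rw [mem_filter] at hv ⊢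
        refine ⟨mem_univ _, hv.2.1, ?_⟩
        have h2 := hv.2.2
        have e : (G.degree v : ℝ) * (1 + h * ((1 - q) * (((ω v).2 : ℕ) / N)) + 2 * K * q) =
            G.degree v * (1 + 2 * K * q) + G.degree v * (h * (1 - q)) / N * ((ω v).2 : ℕ) := by
          ring
        rw [hwin] at h2
        rw [e] at h2
        exact h2)
    rw [hn] at wb
    refine wb.trans (mul_le_mul_of_nonneg_right ?_ hTp.le)
    apply Real.exp_le_exp.mpr
    have h1 : p * (n : ℝ) ≤ π * n := mul_le_mul_of_nonneg_right hpπ hnr.le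
    have := mul_le_mul_of_nonneg_left h1 (sq_nonneg τ)
    linarith
  have key2 : ∀ (cls : Fin Q → Prop) (π : ℝ),
      ((univ.filter cls).card : ℝ) = π * Q → p ≤ π →
      ∃ E : Finset Ω, (E.card : ℝ) ≤ T / 8 ∧ ∀ ω, ω ∉ E → ∀ y1 y2 : ℕ, y1 ≤ y2 →
        y2 ≤ 5 * n ^ 2 → ∀ S : Finset V, (∀ v ∈ S, cls (ω v).1 ∧ win ω y1 y2 v) →
        (S.card : ℝ) ≤ π * ((1 - 4 / M) * ((y2 : ℝ) - y1) + 22 * τ * n) := by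
    intro cls π hπ hpπ
    refine ⟨((range (5 * n ^ 2 + 1) ×ˢ range (5 * n ^ 2 + 1)).filter fun y => y.1 ≤ y.2).biUnion
        fun y => (univ : Finset Ω).filter fun ω =>
        π * ((1 - 4 / M) * ((y.2 : ℝ) - y.1) + 22 * τ * n) <
        ((univ.filter fun v => cls (ω v).1 ∧ win ω y.1 y.2 v).card : ℝ), ?_, ?_⟩
    · refine le_trans ((Nat.cast_le (α := ℝ)).mpr card_biUnion_le) ?_
      push_cast
      refine (sum_le_sum fun y hy => key cls π hπ hpπ y.1 y.2 (mem_filter.mp hy).2).trans ?_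
      rw [sum_const, nsmul_eq_mul]
      have hc : (((range (5 * n ^ 2 + 1) ×ˢ range (5 * n ^ 2 + 1)).filter
          fun y => y.1 ≤ y.2).card : ℝ) ≤ (5 * (n : ℝ) ^ 2 + 1) ^ 2 := by
        have := card_filter_le (range (5 * n ^ 2 + 1) ×ˢ range (5 * n ^ 2 + 1))
          fun y => y.1 ≤ y.2
        rw [card_product, card_range, ← sq] at this
        exact_mod_cast this
      have h1 := mul_le_mul_of_nonneg_right hc
        (by positivity : 0 ≤ Real.exp (-(τ ^ 2 * (p * n) / 4)) * T)
      have h2 := mul_le_mul_of_nonneg_right hI2 hTp.le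
      linarith
    · intro ω hω y1 y2 h1 h2 S hS
      by_contra hc
      apply hω
      rw [mem_biUnion]
      refine ⟨(y1, y2), ?_, mem_filter.mpr ⟨mem_univ _, ?_⟩⟩
      · rw [mem_filter, mem_product, mem_range, mem_range]
        exact ⟨⟨by simp only; omega, by simp only; omega⟩, h1⟩
      · refine (not_le.mp hc).trans_le ?_
        rw [Nat.cast_le]
        refine card_le_card fun v hv => ?_
        rw [mem_filter]
        exact ⟨mem_univ _, hS v hv⟩
  obtain ⟨E3, bE3, hE3⟩ := key2 (fun _ => True) 1 (by simp) hp1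
  obtain ⟨E4, bE4, hE4⟩ := key2 (fun i => 1 ≤ (i : ℕ) ∧ (i : ℕ) ≤ P) p (by
    rw [hp, div_mul_cancel₀ _ hQr.ne']
    refine congrArg (Nat.cast (R := ℝ)) ?_
    convert card_fin_Icc Q P hP) le_rfl
  obtain ⟨ω, hω⟩ : ∃ ω : Ω, ω ∉ (E1 ∪ E2) ∪ (E3 ∪ E4) := by
    by_contra hcon
    push Not at hcon
    have hsub : (univ : Finset Ω) ⊆ (E1 ∪ E2) ∪ (E3 ∪ E4) := fun ω _ => hcon ω
    have hc := (card_le_card hsub).trans ((card_union_le _ _).trans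
      (add_le_add (card_union_le _ _) (card_union_le _ _)))
    have hc' := (Nat.cast_le (α := ℝ)).mpr hc
    push_cast at hc'
    rw [hTu] at hc'
    linarith
  rw [mem_union, mem_union, mem_union, not_or, not_or, not_or] at hω
  obtain ⟨⟨n1, n2⟩, n3, n4⟩ := hω
  refine ⟨univ.filter fun v => P < ((ω v).1 : ℕ),
    univ.filter fun v => 1 ≤ ((ω v).1 : ℕ) ∧ ((ω v).1 : ℕ) ≤ P,
    univ.filter fun v => ((ω v).1 : ℕ) = 0,
    univ.filter fun v => ¬ good ω v, fun v => ((ω v).2 : ℕ), ?_, ?_, ?_, ?_, ?_, ?_, ?_, ?_,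
    ?_, ?_, ?_, ?_⟩
  · rw [disjoint_filter]; intro v _ h1 h2; omega
  · rw [disjoint_filter]; intro v _ h1 h2; omega
  · rw [disjoint_filter]; intro v _ h1 h2; omega
  · intro v
    simp only [mem_filter, mem_univ, true_and]; omega
  · intro v; exact (ω v).2.2
  · intro v hv
    have hg : good ω v := by
      by_contra h; exact hv (mem_filter.mpr ⟨mem_univ _, h⟩)
    convert hg.1 using 5
    ext u; simp [and_comm]
  · intro v hv
    have hg : good ω v := by
      by_contra h; exact hv (mem_filter.mpr ⟨mem_univ _, h⟩)
    convert hg.2.1 using 5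
    ext u; simp only [mem_filter, mem_univ, true_and, SimpleGraph.mem_neighborFinset]; tauto
  · intro v hv a ha
    have hg : good ω v := by
      by_contra h; exact hv (mem_filter.mpr ⟨mem_univ _, h⟩)
    convert hg.2.2 a ha using 5
    ext u; simp only [mem_filter, mem_univ, true_and, SimpleGraph.mem_neighborFinset]; tauto
  · by_contra h
    exact n1 (mem_filter.mpr ⟨mem_univ _, not_le.mp h⟩)
  · by_contra h
    exact n2 (mem_filter.mpr ⟨mem_univ _, not_le.mp h⟩)
  · intro y1 y2 h1 h2
    rw [← one_mul ((1 - 4 / (M : ℝ)) * ((y2 : ℝ) - y1) + 22 * τ * n)]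
    exact hE3 ω n3 y1 y2 h1 h2 _ (fun v hv => ⟨trivial, (mem_filter.mp hv).2⟩)
  · intro y1 y2 h1 h2
    exact hE4 ω n4 y1 y2 h1 h2 _
      (fun v hv => ⟨(mem_filter.mp (mem_filter.mp hv).1).2, (mem_filter.mp hv).2⟩)

/-- The main construction, conditional on two analytic inequalities. -/
lemma main_cond {V : Type*} [Fintype V] [DecidableEq V] [Nonempty V] (G : SimpleGraph V)
    [DecidableRel G.Adj] (n δ M : ℕ) (hn : Fintype.card V = n) (hM : 10 ≤ M)
    (hdeg : ∀ v, δ ≤ G.degree v) (hδM : 2 ^ 30 * M ^ 4 ≤ δ)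
    (hI1 : ∀ d : ℕ, δ ≤ d →
      (d : ℝ) * Real.exp (-((d : ℝ) / (2 ^ 56 * M ^ 4))) ≤ 1 / (2 ^ 90 * M ^ 8))
    (hI2 : (n : ℝ) ^ 4 * Real.exp (-((n : ℝ) / (2 ^ 58 * M ^ 5))) ≤ 1 / 2 ^ 9) :
    ∃ (k : ℕ) (f : Sym2 V → ℕ), IsIrregularAssignment G k f ∧
      (k : ℝ) ≤ n / δ * (1 + 11 / M) + 8 := by
  classical
  have hM10 : (10 : ℝ) ≤ M := by exact_mod_cast hM
  have hMp : (0 : ℝ) < M := by linarith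
  have hMn : 0 < M := by omega
  have hδ : 0 < δ := lt_of_lt_of_le (by positivity) hδM
  have hnn : 0 < n := by rw [← hn]; exact Fintype.card_pos
  have hn1 : (1 : ℝ) ≤ n := by exact_mod_cast hnn
  have hM2 : (1 : ℝ) ≤ (M : ℝ) ^ 2 := one_le_pow₀ (by linarith)
  set h : ℕ := ⌈(n : ℝ) / δ * (1 + 10 / M)⌉₊ with hh
  have hh1 : (n : ℝ) / δ * (1 + 10 / M) ≤ h := Nat.le_ceil _
  have hh2 : (h : ℝ) ≤ (n : ℝ) / δ * (1 + 10 / M) + 1 := (Nat.ceil_lt_add_one (by positivity)).le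
  set q : ℝ := 1 / (2 ^ 12 * M ^ 2) with hq
  set p : ℝ := 1 / (4 * M) with hp
  set τ : ℝ := 1 / (2 ^ 27 * M ^ 2) with hτ
  have hp0 : 0 < p := by rw [hp]; positivity
  obtain ⟨A, C, D, Bad, x, hAC, hAD, hCD, hcov, hx, hB1, hB2, hB3, hvol, hDc, hwA, hwC⟩ :=
    prob_exists G n δ M h (2 ^ 27 * M ^ 2) (2 ^ 12 * M ^ 2) (2 ^ 10 * M) (n / (8 * δ) + 1) hn hM hδ
      hdeg (by positivity) (by nlinarith) (by positivity) q p τ (q ^ 2 * τ / 80)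
      (by rw [hq]; push_cast; ring) (by rw [hp]; push_cast; field_simp; norm_num)
      (by rw [hτ]; push_cast; ring) (by rw [hq, hτ]; positivity)
      (by
        rw [hq]
        apply one_div_le_one_div_of_le (by positivity)
        nlinarith)
      (by
        rw [hq, hτ]
        apply one_div_le_one_div_of_le (by positivity)
        nlinarith)
      hh1
      (fun d hd => by
        have h1 := hI1 d hd
        have e1 : τ ^ 2 * (d : ℝ) / 4 = (d : ℝ) / (2 ^ 56 * M ^ 4) := by
          rw [hτ]; field_simp; ring
        rw [e1]
        set X : ℝ := (d : ℝ) * Real.exp (-((d : ℝ) / (2 ^ 56 * M ^ 4))) with hX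
        have hX0 : 0 ≤ X := by positivity
        have e2 : (d : ℝ) * ((((2 ^ 27 * M ^ 2 : ℕ) : ℝ) + 2) *
            (2 * Real.exp (-((d : ℝ) / (2 ^ 56 * M ^ 4))))) =
            2 * (2 ^ 27 * (M : ℝ) ^ 2 + 2) * X := by
          rw [hX]; push_cast; ring
        rw [e2]
        have h2 : 2 * (2 ^ 27 * (M : ℝ) ^ 2 + 2) ≤ 2 ^ 29 * (M : ℝ) ^ 2 := by nlinarith
        have h3 : 2 ^ 29 * (M : ℝ) ^ 2 * (1 / (2 ^ 90 * M ^ 8)) ≤ q ^ 2 * τ / 80 / 4 := by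
          have e3 : 2 ^ 29 * (M : ℝ) ^ 2 * (1 / (2 ^ 90 * M ^ 8)) = 1 / 2 ^ 61 * (1 / M ^ 6) := by
            field_simp
          have e4 : q ^ 2 * τ / 80 / 4 = 1 / (2 ^ 51 * 320) * (1 / M ^ 6) := by
            rw [hq, hτ]; field_simp; norm_num
          rw [e3, e4]
          apply mul_le_mul_of_nonneg_right (by norm_num) (by positivity)
        calc 2 * (2 ^ 27 * (M : ℝ) ^ 2 + 2) * X ≤ 2 ^ 29 * (M : ℝ) ^ 2 * X :=
              mul_le_mul_of_nonneg_right h2 hX0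
          _ ≤ 2 ^ 29 * (M : ℝ) ^ 2 * (1 / (2 ^ 90 * M ^ 8)) :=
              mul_le_mul_of_nonneg_left h1 (by positivity)
          _ ≤ _ := h3)
      (by
        have e1 : τ ^ 2 * (p * (n : ℝ)) / 4 = (n : ℝ) / (2 ^ 58 * M ^ 5) := by
          rw [hτ, hp]; field_simp; norm_num
        rw [e1]
        have hn2 : (1 : ℝ) ≤ (n : ℝ) ^ 2 := one_le_pow₀ hn1
        have h1 : (5 * (n : ℝ) ^ 2 + 1) ^ 2 ≤ 36 * (n : ℝ) ^ 4 := by nlinarith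
        have h2 := mul_le_mul_of_nonneg_right h1
          (Real.exp_pos (-((n : ℝ) / (2 ^ 58 * M ^ 5)))).le
        linarith)
  exact det_main G n δ M h (2 ^ 27 * M ^ 2) (n / (8 * δ) + 1) hn hM inferInstance hdeg hδM rfl
    hh1 hh2 q p τ hq hp hτ A C D Bad hAC hAD hCD hcov x hx hB1 hB2 hB3
    (hvol.trans (le_of_eq (by ring))) hDc _ (fun v => rfl) hwA hwC

/-- Without isolated edges and isolated vertices, some assignment always exists. -/
lemma exists_easy {V : Type*} [Fintype V] [DecidableEq V] (G : SimpleGraph V)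
    [DecidableRel G.Adj] (n : ℕ) (hn : Fintype.card V = n) (hdeg : ∀ v, 1 ≤ G.degree v)
    (hiso : ¬ ∃ u v : V, G.Adj u v ∧ G.degree u = 1 ∧ G.degree v = 1) :
    ∃ f : Sym2 V → ℕ, IsIrregularAssignment G (2 * n + 1) f := by
  classical
  have hone : ∀ u v : V, u ≠ v → (∀ a, G.Adj u a → a = v) → G.Adj u v ∧ G.degree u = 1 := by
    intro u v _ h
    have hp : 0 < (G.neighborFinset u).card := by
      rw [G.card_neighborFinset_eq_degree]; exact hdeg u
    obtain ⟨a, ha⟩ := card_pos.mp hp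
    rw [SimpleGraph.mem_neighborFinset] at ha
    have hav := h a ha
    subst hav
    refine ⟨ha, ?_⟩
    rw [← G.card_neighborFinset_eq_degree, card_eq_one]
    refine ⟨a, ?_⟩
    ext b
    rw [SimpleGraph.mem_neighborFinset, mem_singleton]
    exact ⟨h b, fun hb => hb ▸ ha⟩
  have hS : ∀ u ∈ (univ : Finset V), ∀ v ∈ (univ : Finset V), u ≠ v →
      ∃ e ∈ G.edgeSet, (u ∈ e ∧ v ∉ e) ∨ (v ∈ e ∧ u ∉ e) := by
    intro u _ v _ huv
    by_contra hcon
    push Not at hcon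
    apply hiso
    have h1 : ∀ a, G.Adj u a → a = v := by
      intro a ha
      have := (hcon s(u, a) (G.mem_edgeSet.mpr ha)).1 (Sym2.mem_mk_left u a)
      rw [Sym2.mem_iff] at this
      rcases this with h | h
      · exact absurd h.symm huv
      · exact h.symm
    have h2 : ∀ a, G.Adj v a → a = u := by
      intro a ha
      have := (hcon s(v, a) (G.mem_edgeSet.mpr ha)).2 (Sym2.mem_mk_left v a)
      rw [Sym2.mem_iff] at this
      rcases this with h | h
      · exact absurd h huv
      · exact h.symm
    exact ⟨u, v, (hone u v huv h1).1, (hone u v huv h1).2, (hone v u huv.symm h2).2⟩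
  obtain ⟨r, hr1, -, hr3⟩ := exists_perturb G univ (fun _ => 1) hS
  refine ⟨fun e => 1 + r e, ?_, ?_⟩
  · intro e _
    have := hr1 e
    rw [card_univ, hn] at this
    rw [mem_Icc]
    simp only
    omega
  · intro u v huv
    exact hr3 (by simp) (by simp) huv

lemma strength_le {V : Type*} [Fintype V] (G : SimpleGraph V)
    [DecidableRel G.Adj] (hE : ∃ u v, G.Adj u v) (k : ℕ)
    (hk : ∃ f : Sym2 V → ℕ, IsIrregularAssignment G k f) :
    ∃ s : ℕ, irregularityStrength G = (s : ℕ∞) ∧ s ≤ k := by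
  have hk1 : 1 ≤ k := by
    obtain ⟨u, v, huv⟩ := hE
    obtain ⟨f, hf⟩ := hk
    have := mem_Icc.mp (hf.1 s(u, v) (G.mem_edgeSet.mpr huv))
    omega
  have hle : irregularityStrength G ≤ (k : ℕ∞) :=
    iInf_le_of_le k (iInf_le_of_le hk1 (iInf_le_of_le hk le_rfl))
  have hne : irregularityStrength G ≠ ⊤ := ne_top_of_le_ne_top (ENat.coe_ne_top k) hle
  obtain ⟨s, hs⟩ := ENat.ne_top_iff_exists.mp hne
  refine ⟨s, hs.symm, ?_⟩
  rw [← hs] at hle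
  exact_mod_cast hle

/-- Stretched exponentials beat powers. -/
lemma exp_beats (s c κ b : ℝ) (hc : 0 < c) (hκ : 0 < κ) (hb : 0 < b) :
    ∃ X : ℝ, ∀ x : ℝ, X ≤ x → x ^ s * Real.exp (-(c * x ^ κ)) ≤ b := by
  have h1 := tendsto_rpow_mul_exp_neg_mul_atTop_nhds_zero (s / κ) c hc
  have h2 := h1.comp (tendsto_rpow_atTop hκ)
  have h3 := h2.eventually (ge_mem_nhds hb)
  rw [Filter.eventually_atTop] at h3
  obtain ⟨X, hX⟩ := h3
  refine ⟨max X 1, fun x hx => ?_⟩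
  have h4 := hX x (le_trans (le_max_left _ _) hx)
  have hx0 : 0 ≤ x := le_trans zero_le_one (le_trans (le_max_right _ _) hx)
  simp only [Function.comp] at h4
  rw [← Real.rpow_mul hx0, mul_div_cancel₀ _ hκ.ne', neg_mul] at h4
  exact h4

lemma rpow_large (κ b : ℝ) (hκ : 0 < κ) : ∃ X : ℝ, ∀ x : ℝ, X ≤ x → b ≤ x ^ κ := by
  have h := (tendsto_rpow_atTop hκ).eventually_ge_atTop b
  rw [Filter.eventually_atTop] at h
  exact h

lemma analytic (ε : ℝ) (h0 : 0 < ε) (h1 : ε < 1 / 4) :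
    ∃ δ0 : ℕ, 1 ≤ δ0 ∧ ∀ n δ M : ℕ, δ0 ≤ δ → δ ≤ n →
      M = max 10 (min ⌊(δ : ℝ) ^ ε⌋₊ (n / δ)) →
      2 ^ 30 * M ^ 4 ≤ δ ∧
      (∀ d : ℕ, δ ≤ d →
        (d : ℝ) * Real.exp (-((d : ℝ) / (2 ^ 56 * M ^ 4))) ≤ 1 / (2 ^ 90 * M ^ 8)) ∧
      (n : ℝ) ^ 4 * Real.exp (-((n : ℝ) / (2 ^ 58 * M ^ 5))) ≤ 1 / 2 ^ 9 := by
  set θ : ℝ := 1 - 4 * ε with hθ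
  have hθ0 : 0 < θ := by rw [hθ]; linarith
  set ρ : ℝ := ε / (1 + ε) with hρ
  have hρ0 : 0 < ρ := by rw [hρ]; positivity
  have hρ5 : ρ * 5 < 1 := by
    rw [hρ, div_mul_eq_mul_div, div_lt_one (by linarith)]; linarith
  obtain ⟨X1, hX1⟩ := rpow_large ρ 10 hρ0
  obtain ⟨X2, hX2⟩ := rpow_large ε 10 h0
  obtain ⟨X3, hX3⟩ := rpow_large θ (2 ^ 30) hθ0
  obtain ⟨X4, hX4⟩ := exp_beats 3 (1 / 2 ^ 56) θ (1 / 2 ^ 90) (by positivity) hθ0 (by positivity)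
  obtain ⟨X5, hX5⟩ := exp_beats 4 (1 / 2 ^ 58) (1 - ρ * 5) (1 / 2 ^ 9) (by positivity)
    (by linarith) (by positivity)
  set X : ℝ := max X1 (max X2 (max X3 (max X4 X5))) with hX
  refine ⟨⌈X⌉₊ + 1, by omega, fun n δ M hδ hδn hM => ?_⟩
  have hδX : X ≤ δ := by
    have h2 : ((⌈X⌉₊ + 1 : ℕ) : ℝ) ≤ δ := by exact_mod_cast hδ
    push_cast at h2
    have := Nat.le_ceil X
    linarith
  have m1 : X1 ≤ X := le_max_left _ _
  have m2 : X2 ≤ X := (le_max_left _ _).trans (le_max_right _ _)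
  have m3 : X3 ≤ X := (le_max_left _ _).trans ((le_max_right _ _).trans (le_max_right _ _))
  have m4 : X4 ≤ X := (le_max_left _ _).trans
    ((le_max_right _ _).trans ((le_max_right _ _).trans (le_max_right _ _)))
  have m5 : X5 ≤ X := (le_max_right _ _).trans
    ((le_max_right _ _).trans ((le_max_right _ _).trans (le_max_right _ _)))
  have hδ1 : 1 ≤ δ := by omega
  have hδr : (1 : ℝ) ≤ δ := by exact_mod_cast hδ1
  have hδp : (0 : ℝ) < δ := by linarith
  have hnr : (δ : ℝ) ≤ n := by exact_mod_cast hδn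
  have hnp : (0 : ℝ) < n := by linarith
  have hM10 : 10 ≤ M := by rw [hM]; exact le_max_left _ _
  have hMp : (0 : ℝ) < M := by
    have : 0 < M := by omega
    exact_mod_cast this
  have hMδ : (M : ℝ) ≤ (δ : ℝ) ^ ε := by
    rw [hM, Nat.cast_max]
    apply max_le
    · have := hX2 δ (m2.trans hδX); exact_mod_cast this
    · refine le_trans ?_ (Nat.floor_le (Real.rpow_nonneg hδp.le ε))
      exact_mod_cast min_le_left _ _
  have hMn : (M : ℝ) ≤ (n : ℝ) ^ ρ := by
    rw [hM, Nat.cast_max]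
    apply max_le
    · have := hX1 n (m1.trans (hδX.trans hnr)); exact_mod_cast this
    · set m : ℕ := min ⌊(δ : ℝ) ^ ε⌋₊ (n / δ) with hm
      have a1 : (m : ℝ) ≤ (δ : ℝ) ^ ε := by
        refine le_trans ?_ (Nat.floor_le (Real.rpow_nonneg hδp.le ε))
        exact_mod_cast min_le_left _ _
      have a2 : (m : ℝ) ≤ (n : ℝ) / δ := by
        refine le_trans ?_ (Nat.cast_div_le (α := ℝ))
        exact_mod_cast min_le_right _ _
      have hm0 : (0 : ℝ) ≤ m := Nat.cast_nonneg _
      have a3 : (m : ℝ) ^ (1 + ε) ≤ (n : ℝ) ^ ε := by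
        rcases hm0.eq_or_lt with h | h
        · rw [← h, Real.zero_rpow (by linarith)]; exact Real.rpow_nonneg hnp.le _
        · rw [Real.rpow_add h, Real.rpow_one]
          have a4 : (m : ℝ) ^ ε ≤ ((n : ℝ) / δ) ^ ε := Real.rpow_le_rpow hm0 a2 h0.le
          calc (m : ℝ) * (m : ℝ) ^ ε ≤ (δ : ℝ) ^ ε * ((n : ℝ) / δ) ^ ε :=
                mul_le_mul a1 a4 (Real.rpow_nonneg hm0 _) (Real.rpow_nonneg hδp.le _)
            _ = (n : ℝ) ^ ε := by
                rw [← Real.mul_rpow hδp.le (by positivity), mul_div_cancel₀ _ hδp.ne']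
      have a5 := Real.rpow_le_rpow (Real.rpow_nonneg hm0 _) a3
        (by positivity : (0 : ℝ) ≤ 1 / (1 + ε))
      rw [← Real.rpow_mul hm0, ← Real.rpow_mul hnp.le, mul_one_div_cancel (by linarith),
        Real.rpow_one, mul_one_div] at a5
      exact a5
  refine ⟨?_, ?_, ?_⟩
  · have b1 : (M : ℝ) ^ 4 ≤ (δ : ℝ) ^ (ε * 4) := by
      refine (pow_le_pow_left₀ hMp.le hMδ 4).trans (le_of_eq ?_)
      rw [← Real.rpow_natCast, ← Real.rpow_mul hδp.le]; norm_num
    have b2 := hX3 δ (m3.trans hδX)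
    have b3 : (δ : ℝ) ^ θ * (δ : ℝ) ^ (ε * 4) = δ := by
      rw [← Real.rpow_add hδp, hθ, show 1 - 4 * ε + ε * 4 = 1 by ring, Real.rpow_one]
    have b4 : (2 : ℝ) ^ 30 * M ^ 4 ≤ δ := by
      rw [← b3]
      exact mul_le_mul b2 b1 (by positivity) (by positivity)
    exact_mod_cast b4
  · intro d hd
    have hdr : (δ : ℝ) ≤ d := by exact_mod_cast hd
    have hdp : (0 : ℝ) < d := by linarith
    have hd1 : (1 : ℝ) ≤ d := by linarith
    have hMd : (M : ℝ) ≤ (d : ℝ) ^ ε := hMδ.trans (Real.rpow_le_rpow hδp.le hdr h0.le)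
    have b1 : (M : ℝ) ^ 4 ≤ (d : ℝ) ^ (ε * 4) := by
      refine (pow_le_pow_left₀ hMp.le hMd 4).trans (le_of_eq ?_)
      rw [← Real.rpow_natCast, ← Real.rpow_mul hdp.le]; norm_num
    have b2 : (M : ℝ) ^ 8 ≤ (d : ℝ) ^ 2 := by
      have b3 : (d : ℝ) ^ (ε * 4) ≤ d := by
        calc (d : ℝ) ^ (ε * 4) ≤ (d : ℝ) ^ (1 : ℝ) :=
              Real.rpow_le_rpow_of_exponent_le hd1 (by linarith)
          _ = d := Real.rpow_one _
      calc (M : ℝ) ^ 8 = ((M : ℝ) ^ 4) ^ 2 := by ring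
        _ ≤ (d : ℝ) ^ 2 := pow_le_pow_left₀ (by positivity) (b1.trans b3) 2
    have b4 : 1 / 2 ^ 56 * (d : ℝ) ^ θ ≤ (d : ℝ) / (2 ^ 56 * M ^ 4) := by
      rw [le_div_iff₀ (by positivity)]
      have b5 : (d : ℝ) ^ θ * (d : ℝ) ^ (ε * 4) = d := by
        rw [← Real.rpow_add hdp, hθ, show 1 - 4 * ε + ε * 4 = 1 by ring, Real.rpow_one]
      have b6 := mul_le_mul_of_nonneg_left b1 (Real.rpow_nonneg hdp.le θ)
      rw [b5] at b6
      linarith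
    have b7 := hX4 d (m4.trans (hδX.trans hdr))
    have b8 : Real.exp (-((d : ℝ) / (2 ^ 56 * M ^ 4))) ≤
        Real.exp (-(1 / 2 ^ 56 * (d : ℝ) ^ θ)) := Real.exp_le_exp.mpr (by linarith)
    have e3 : (d : ℝ) ^ (3 : ℝ) = d ^ 3 := by
      rw [← Real.rpow_natCast]; norm_num
    rw [e3] at b7
    rw [le_div_iff₀ (by positivity)]
    set Y := Real.exp (-((d : ℝ) / (2 ^ 56 * M ^ 4))) with hY
    set Z := Real.exp (-(1 / 2 ^ 56 * (d : ℝ) ^ θ)) with hZ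
    have hY0 : 0 < Y := Real.exp_pos _
    have c1 : (d : ℝ) * Y * (2 ^ 90 * M ^ 8) ≤ (d : ℝ) * Z * (2 ^ 90 * d ^ 2) := by
      apply mul_le_mul
      · exact mul_le_mul_of_nonneg_left b8 hdp.le
      · exact mul_le_mul_of_nonneg_left b2 (by positivity)
      · positivity
      · positivity
    have c2 : (d : ℝ) * Z * (2 ^ 90 * d ^ 2) = 2 ^ 90 * ((d : ℝ) ^ 3 * Z) := by ring
    have c3 := mul_le_mul_of_nonneg_left b7 (by positivity : (0 : ℝ) ≤ 2 ^ 90)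
    have c4 : (2 : ℝ) ^ 90 * (1 / 2 ^ 90) = 1 := by norm_num
    linarith
  · have b1 : (M : ℝ) ^ 5 ≤ (n : ℝ) ^ (ρ * 5) := by
      refine (pow_le_pow_left₀ hMp.le hMn 5).trans (le_of_eq ?_)
      rw [← Real.rpow_natCast, ← Real.rpow_mul hnp.le]; norm_num
    have b4 : 1 / 2 ^ 58 * (n : ℝ) ^ (1 - ρ * 5) ≤ (n : ℝ) / (2 ^ 58 * M ^ 5) := by
      rw [le_div_iff₀ (by positivity)]
      have b5 : (n : ℝ) ^ (1 - ρ * 5) * (n : ℝ) ^ (ρ * 5) = n := by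
        rw [← Real.rpow_add hnp, sub_add_cancel, Real.rpow_one]
      have b6 := mul_le_mul_of_nonneg_left b1 (Real.rpow_nonneg hnp.le (1 - ρ * 5))
      rw [b5] at b6
      linarith
    have b7 := hX5 n (m5.trans (hδX.trans hnr))
    have e3 : (n : ℝ) ^ (4 : ℝ) = n ^ 4 := by
      rw [← Real.rpow_natCast]; norm_num
    rw [e3] at b7
    refine le_trans (mul_le_mul_of_nonneg_left (Real.exp_le_exp.mpr ?_) (by positivity)) b7
    linarith


end helpers

/-- Generalized Faudree–Lehel conjecture, asymptotic form: for every `ε ∈ (0, 0.25)`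
there are absolute constants `C₁, C₂` such that every graph `G` on `n` vertices with
minimum degree `δ ≥ 1` and without isolated edges satisfies
`s(G) ≤ (n/δ)(1 + C₁/δ^ε) + C₂`. -/
theorem generalized_faudree_lehel_asymptotic :
    ∀ ε : ℝ, ε ∈ Set.Ioo (0 : ℝ) 0.25 →
    ∃ C₁ C₂ : ℝ, ∀ (V : Type) [Fintype V] (G : SimpleGraph V) [DecidableRel G.Adj]
      (n δ : ℕ), Fintype.card V = n → G.minDegree = δ → 1 ≤ δ →
      (¬ ∃ u v : V, G.Adj u v ∧ G.degree u = 1 ∧ G.degree v = 1) →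
      ∃ s : ℕ, irregularityStrength G = (s : ℕ∞) ∧
        (s : ℝ) ≤ ((n : ℝ) / (δ : ℝ)) * (1 + C₁ / (δ : ℝ) ^ ε) + C₂ := by
  intro ε hε
  obtain ⟨h0, h1⟩ := hε
  have h1' : ε < 1 / 4 := by norm_num at h1 ⊢; exact h1
  obtain ⟨δ0, hδ0, han⟩ := analytic ε h0 h1'
  refine ⟨2 * (δ0 : ℝ) ^ 2 + 22, 30, ?_⟩
  intro V _ G _ n δ hn hmin hδ hiso
  classical
  have hδr : (1 : ℝ) ≤ δ := by exact_mod_cast hδ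
  have hδp : (0 : ℝ) < δ := by linarith
  have hδ0r : (1 : ℝ) ≤ δ0 := by exact_mod_cast hδ0
  have hdeg : ∀ v, δ ≤ G.degree v := fun v => hmin ▸ G.minDegree_le_degree v
  have hne : Nonempty V := by
    by_contra h
    rw [not_nonempty_iff] at h
    have : G.minDegree = 0 := by
      rw [SimpleGraph.minDegree_of_isEmpty]
    omega
  obtain ⟨v0⟩ := hne
  have hne : Nonempty V := ⟨v0⟩
  have hE : ∃ u v, G.Adj u v := by
    have hp : 0 < (G.neighborFinset v0).card := by
      rw [G.card_neighborFinset_eq_degree]; exact lt_of_lt_of_le hδ (hdeg v0)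
    obtain ⟨a, ha⟩ := Finset.card_pos.mp hp
    exact ⟨v0, a, (G.mem_neighborFinset v0 a).mp ha⟩
  have hδn : δ ≤ n := by
    rw [← hn]; exact (hdeg v0).trans (G.degree_lt_card_verts v0).le
  have hδnr : (δ : ℝ) ≤ n := by exact_mod_cast hδn
  have hr1 : 1 ≤ (n : ℝ) / δ := by rw [le_div_iff₀ hδp]; linarith
  have hδε : 1 ≤ (δ : ℝ) ^ ε := Real.one_le_rpow hδr h0.le
  have hδεp : 0 < (δ : ℝ) ^ ε := by linarith
  have hrpos : 0 < (n : ℝ) / δ := by linarith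
  set r : ℝ := (n : ℝ) / δ with hr
  have hnr : (n : ℝ) = r * δ := by rw [hr, div_mul_cancel₀ _ hδp.ne']
  suffices hk : ∃ k : ℕ, (∃ f : Sym2 V → ℕ, IsIrregularAssignment G k f) ∧
      (k : ℝ) ≤ r * (1 + (2 * (δ0 : ℝ) ^ 2 + 22) / (δ : ℝ) ^ ε) + 30 by
    obtain ⟨k, hf, hkb⟩ := hk
    obtain ⟨s, hs, hsk⟩ := strength_le G hE k hf
    refine ⟨s, hs, le_trans ?_ hkb⟩
    exact_mod_cast hsk
  rcases lt_or_ge δ δ0 with hlt | hge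
  · refine ⟨2 * n + 1, exists_easy G n hn (fun v => hδ.trans (hdeg v)) hiso, ?_⟩
    have hltr : (δ : ℝ) ≤ δ0 := by exact_mod_cast hlt.le
    have a1 : (δ : ℝ) ^ ε ≤ δ0 := by
      calc (δ : ℝ) ^ ε ≤ (δ : ℝ) ^ (1 : ℝ) :=
            Real.rpow_le_rpow_of_exponent_le hδr (by linarith)
        _ = δ := Real.rpow_one _
        _ ≤ δ0 := hltr
    have a2 : 2 * (δ0 : ℝ) ≤ (2 * (δ0 : ℝ) ^ 2 + 22) / (δ : ℝ) ^ ε := by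
      rw [le_div_iff₀ hδεp]
      have := mul_le_mul_of_nonneg_left a1 (by linarith : (0 : ℝ) ≤ 2 * δ0)
      nlinarith
    have a3 := mul_le_mul_of_nonneg_left a2 hrpos.le
    have a4 := mul_le_mul_of_nonneg_left hltr hrpos.le
    push_cast
    rw [hnr, mul_add]
    linarith
  · set M : ℕ := max 10 (min ⌊(δ : ℝ) ^ ε⌋₊ (n / δ)) with hM
    obtain ⟨g1, g2, g3⟩ := han n δ M hge hδn hM
    have hM10 : 10 ≤ M := le_max_left _ _
    have hMp : (0 : ℝ) < M := by
      have : 0 < M := by omega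
      exact_mod_cast this
    obtain ⟨k, f, hf, hk⟩ := main_cond G n δ M hn hM10 hdeg g1 g2 g3
    refine ⟨k, ⟨f, hf⟩, hk.trans ?_⟩
    have hC : 22 / (δ : ℝ) ^ ε ≤ (2 * (δ0 : ℝ) ^ 2 + 22) / (δ : ℝ) ^ ε := by
      apply div_le_div_of_nonneg_right _ hδεp.le
      have := sq_nonneg (δ0 : ℝ)
      linarith
    have hfl : ∀ y : ℝ, 1 ≤ y → y / 2 ≤ (⌊y⌋₊ : ℝ) := by
      intro y hy
      have b1 := Nat.lt_floor_add_one y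
      have b2 : 1 ≤ ⌊y⌋₊ := Nat.one_le_floor_iff y |>.mpr hy
      have b3 : (1 : ℝ) ≤ (⌊y⌋₊ : ℝ) := by exact_mod_cast b2
      linarith
    rcases le_total ⌊(δ : ℝ) ^ ε⌋₊ (n / δ) with hc | hc
    · have b1 : ⌊(δ : ℝ) ^ ε⌋₊ ≤ M := by
        rw [hM, min_eq_left hc]; exact le_max_right _ _
      have b2 : (δ : ℝ) ^ ε / 2 ≤ M := (hfl _ hδε).trans (by exact_mod_cast b1)
      have b3 : 11 / (M : ℝ) ≤ 22 / (δ : ℝ) ^ ε := by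
        rw [div_le_div_iff₀ hMp hδεp]; linarith
      have b4 := mul_le_mul_of_nonneg_left (b3.trans hC) hrpos.le
      rw [mul_add, mul_add]
      linarith
    · have b1 : n / δ ≤ M := by
        rw [hM, min_eq_right hc]; exact le_max_right _ _
      have b2 : r / 2 ≤ M := by
        refine (hfl _ hr1).trans ?_
        rw [hr, Nat.floor_div_eq_div]
        exact_mod_cast b1
      have b3 : r * (11 / (M : ℝ)) ≤ 22 := by
        rw [mul_div_assoc', div_le_iff₀ hMp]; linarith
      have b4 : 0 ≤ r * ((2 * (δ0 : ℝ) ^ 2 + 22) / (δ : ℝ) ^ ε) := by positivity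
      rw [mul_add, mul_add]
      linarith

end FL
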